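/- arXiv:1609.02577 — 8 statements merged into one kernel-verified Lean document; each statement's English description precedes it below -/
import Mathlib

section
/- Let C be a compact metrizable topological space, (g_n) a sequence of continuous maps from C to C, λ and ν Borel probability measures on C, and A ⊆ C a Borel set. Assume that for λ-almost every x ∈ C, every cluster point of the sequence (g_n x)_{n∈ℕ} belongs to A, and that the pushforward measures (g_n)_*λ converge to ν in the topology of weak convergence of probability measures. Then ν(closure of A) = 1. -/
/-!
The distance `f` to `A` is a bounded continuous function on the compact space `C`. For
`λ`-a.e. `x`, compactness and the hypothesis on cluster points force `f (gₙ x) → 0`, so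
`∫ f ∘ gₙ dλ → 0` by dominated convergence. Weak convergence then gives `∫ f dν = 0`; as `f ≥ 0`,
`f` vanishes `ν`-a.e., and its zero set is `closure A`.
-/

open MeasureTheory Filter Topology

/-- If for `λ`-a.e. `x` every cluster point of `(gₙ x)` lies in `A`, and the
pushforwards `(gₙ)_* λ` converge weakly to `ν`, then `ν (closure A) = 1`. -/
theorem weak_limit_supported_on_closure
    {C : Type*} [TopologicalSpace C] [CompactSpace C] [TopologicalSpace.MetrizableSpace C]
    [MeasurableSpace C] [BorelSpace C]
    (g : ℕ → C → C) (hg : ∀ n, Continuous (g n))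
    (lam ν : Measure C) [IsProbabilityMeasure lam] [IsProbabilityMeasure ν]
    (A : Set C) (hA : MeasurableSet A)
    (hcluster : ∀ᵐ x ∂lam, ∀ y : C, MapClusterPt y atTop (fun n => g n x) → y ∈ A)
    (hconv : ∀ f : BoundedContinuousFunction C ℝ,
      Tendsto (fun n => ∫ x, f (g n x) ∂lam) atTop (𝓝 (∫ x, f x ∂ν))) :
    ν (closure A) = 1 := by
  let _ := TopologicalSpace.metrizableSpaceMetric C
  -- `Metric.infDist` to the empty set is `0`, so `A.Nonempty` is needed; it follows from the
  -- existence of a cluster point of one orbit.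
  have hne : A.Nonempty := by
    obtain ⟨x, hx⟩ := hcluster.exists
    obtain ⟨y, -, hy⟩ := isCompact_univ.exists_mapClusterPt (f := atTop)
      (u := fun n => g n x) (by simp)
    exact ⟨y, hx y hy⟩
  let f : BoundedContinuousFunction C ℝ :=
    BoundedContinuousFunction.mkOfCompact ⟨fun x => Metric.infDist x A,
      Metric.continuous_infDist_pt A⟩
  have hf (x : C) : f x = Metric.infDist x A := rfl
  have hlim : ∀ᵐ x ∂lam, Tendsto (fun n => f (g n x)) atTop (𝓝 0) := by
    filter_upwards [hcluster] with x hx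
    refine tendsto_order.2 ⟨fun a ha => .of_forall fun n => ha.trans_le Metric.infDist_nonneg,
      fun a ha => ?_⟩
    by_contra hcon
    have hfreq : ∃ᶠ n in atTop, g n x ∈ {y | a ≤ f y} := by
      simpa only [Filter.not_eventually, not_lt, Set.mem_ofPred_eq] using hcon
    obtain ⟨y, hy, hyc⟩ := (isClosed_le continuous_const
      f.continuous).isCompact.exists_mapClusterPt_of_frequently hfreq
    have h0 : f y = 0 := Metric.infDist_zero_of_mem (hx y hyc)
    have hya : a ≤ f y := hy
    linarith
  have hzero : Tendsto (fun n => ∫ x, f (g n x) ∂lam) atTop (𝓝 0) := by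
    simpa using tendsto_integral_of_dominated_convergence (fun _ => ‖f‖)
      (fun n => (f.continuous.comp (hg n)).aestronglyMeasurable) (integrable_const _)
      (fun n => .of_forall fun x => f.norm_coe_le_norm _) hlim
  have hint : ∫ x, f x ∂ν = 0 := tendsto_nhds_unique (hconv f) hzero
  have hae := (integral_eq_zero_iff_of_nonneg (fun x => Metric.infDist_nonneg)
    (f.integrable ν)).1 hint
  rw [prob_compl_eq_zero_iff isClosed_closure.measurableSet |>.symm, ← mem_ae_iff]
  filter_upwards [hae] with x hx
  exact (Metric.mem_closure_iff_infDist_zero hne).2 hx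
end

section
/- Let G be a countable discrete group acting on a compact metrizable space Y by homeomorphisms, μ a probability measure on G, and ν a Borel probability measure on Y that is μ̌-stationary, i.e. ν(A) = ∑_{g∈G} μ({g})·ν(g•A) for every Borel set A ⊆ Y. Assume moreover that ν is the unique μ̌-stationary Borel probability measure on Y. Let Ω = G^ℕ carry the infinite product measure ℙ = μ^⊗ℕ, and define T : Ω × Y → Ω × Y by T(ω, y) = (Sω, (ω 0)⁻¹ • y), where S is the shift (Sω)(n) = ω(n+1). Then T is ergodic with respect to ℙ ⊗ ν: every measurable set E ⊆ Ω × Y with T⁻¹(E) = E satisfies (ℙ ⊗ ν)(E) = 0 or (ℙ ⊗ ν)(E) = 1. -/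
/-!
Write `E_y = {ω | (ω, y) ∈ E}` and `φ y = ℙ (E_y)` for the fibres of a `T`-invariant set `E` and
their measure. Since the first letter `ω 0` is independent of the shifted sequence (`map_consSeq`),
invariance of `E` says that `φ` is harmonic: `φ y = ∑ μ{g} φ (g⁻¹ • y)`. Stationarity of `ν` means
that `(g, y) ↦ g⁻¹ • y` pushes `μ ⊗ ν` forward to `ν`, so the integral of
`(φ (g⁻¹ • y) - φ y)²` against `μ ⊗ ν` vanishes and `φ (g⁻¹ • y) = φ y` almost everywhere
(`harmonic_invariant`). Hence `φ ν`, once normalised, is stationary as well, and uniqueness forces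
`φ` to be almost everywhere equal to `c = (ℙ ⊗ ν)(E)`, provided `c ≠ 0`
(`invariant_density_const`).

Peeling off the letters of a cylinder one at a time upgrades this to `ℙ (E_y ∩ C) = c ℙ(C)` for
every measurable `C` and almost every `y` (`fibre_independent`). Thus `E` is independent of every
rectangle `C × B`, so of every measurable set, so of `E` itself; therefore `c ∈ {0, 1}`.
-/

open MeasureTheory Filter Topology
open scoped Pointwise

open scoped ENNReal

/-! ### Splitting off the first letter of a Bernoulli sequence -/

/-- The sequence `g, ω 0, ω 1, …`; the inverse of `ω ↦ (ω 0, Sω)`, with `S` the shift. -/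
def consSeq {G : Type*} (p : G × (ℕ → G)) : ℕ → G
  | 0 => p.1
  | n + 1 => p.2 n

lemma measurable_consSeq {G : Type*} [MeasurableSpace G] :
    Measurable (consSeq : G × (ℕ → G) → ℕ → G) := by
  rw [measurable_pi_iff]
  rintro (_ | n)
  · exact measurable_fst
  · exact (measurable_pi_apply n).comp measurable_snd

/-- Finite-dimensional boxes indexed by an arbitrary finite set may be taken over an initial
segment of `ℕ`, by padding with `Set.univ`. -/
lemma exists_initial_cylinder {G : Type*} (s : Finset ℕ) (B : ℕ → Set G) :
    ∃ (n : ℕ) (B' : ℕ → Set G),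
      (s : Set ℕ).pi B = {ω : ℕ → G | ∀ i ∈ Finset.range n, ω i ∈ B' i} := by
  classical
  refine ⟨s.sup id + 1, fun i => if i ∈ s then B i else Set.univ, ?_⟩
  ext ω
  simp only [Set.mem_pi, Finset.mem_coe, Set.mem_ofPred_eq, Finset.mem_range]
  constructor
  · intro h i _
    by_cases hi : i ∈ s
    · simpa [hi] using h i hi
    · simp [hi]
  · intro h i hi
    have h1 : i ≤ s.sup id := Finset.le_sup (f := id) hi
    simpa [hi] using h i (by omega)

lemma consSeq_preimage_cylinder {G : Type*} (n : ℕ) (B : ℕ → Set G) :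
    consSeq ⁻¹' {ω : ℕ → G | ∀ i ∈ Finset.range (n + 1), ω i ∈ B i} =
      B 0 ×ˢ {ω : ℕ → G | ∀ i ∈ Finset.range n, ω i ∈ B (i + 1)} := by
  ext ⟨g, ω⟩
  simp only [Set.mem_preimage, Set.mem_ofPred_eq, Finset.mem_range, Set.mem_prod]
  constructor
  · intro h
    exact ⟨h 0 (by omega), fun i hi => h (i + 1) (by omega)⟩
  · rintro ⟨h0, h⟩ (_ | i) hi
    · exact h0
    · exact h i (by omega)

section Bernoulli

variable {G : Type*} [Countable G] [MeasurableSpace G] [MeasurableSingletonClass G]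
  {μ : Measure G} [IsProbabilityMeasure μ] {ℙ : Measure (ℕ → G)} [IsProbabilityMeasure ℙ]

/-- The first letter and the shifted sequence are independent with laws `μ` and `ℙ`. -/
lemma map_consSeq
    (hℙ : ∀ (s : Finset ℕ) (B : ℕ → Set G),
      ℙ {ω | ∀ i ∈ s, ω i ∈ B i} = ∏ i ∈ s, μ (B i)) :
    (μ.prod ℙ).map consSeq = ℙ := by
  have : IsProbabilityMeasure ((μ.prod ℙ).map consSeq) :=
    Measure.isProbabilityMeasure_map measurable_consSeq.aemeasurable
  refine ext_of_generate_finite _ generateFrom_squareCylinders.symm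
    (isPiSystem_squareCylinders (fun _ ↦ MeasurableSpace.isPiSystem_measurableSet) (by simp))
    ?_ (by simp)
  rintro _ ⟨s, B, -, rfl⟩
  obtain ⟨n, B', h⟩ := exists_initial_cylinder s B
  have hm : MeasurableSet ((s : Set ℕ).pi B) :=
    MeasurableSet.pi s.countable_toSet fun i _ => .of_discrete
  rw [Measure.map_apply measurable_consSeq hm, h]
  rcases n with _ | n
  · simp
  · rw [consSeq_preimage_cylinder, Measure.prod_prod, hℙ, hℙ, Finset.prod_range_succ', mul_comm]

lemma measure_eq_lintegral_consSeq
    (hℙ : ∀ (s : Finset ℕ) (B : ℕ → Set G),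
      ℙ {ω | ∀ i ∈ s, ω i ∈ B i} = ∏ i ∈ s, μ (B i))
    {D : Set (ℕ → G)} (hD : MeasurableSet D) :
    ℙ D = ∫⁻ g, ℙ {ω | consSeq (g, ω) ∈ D} ∂μ := by
  conv_lhs => rw [← map_consSeq hℙ]
  rw [Measure.map_apply measurable_consSeq hD, Measure.prod_apply (measurable_consSeq hD)]
  rfl

end Bernoulli

/-! ### Stationary measures and harmonic functions -/

section Action

variable {G : Type*} [Group G] [Countable G] [MeasurableSpace G] [MeasurableSingletonClass G]
  {Y : Type*} [MeasurableSpace Y] [MulAction G Y]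
  {μ : Measure G}

/-- The stationarity sum is the mass that the pushforward of `μ ⊗ ν` under
`(g, y) ↦ g⁻¹ • y` gives to `A`. -/
lemma prod_preimage_inv_smul (hK : Measurable fun p : G × Y => p.1⁻¹ • p.2)
    (ν : Measure Y) [SFinite ν] {A : Set Y} (hA : MeasurableSet A) :
    μ.prod ν ((fun p : G × Y => p.1⁻¹ • p.2) ⁻¹' A) = ∑' g : G, μ {g} * ν (g • A) := by
  rw [Measure.prod_apply (hK hA), lintegral_countable']
  refine tsum_congr fun g => ?_
  rw [mul_comm]
  congr 2
  ext y
  simp [Set.mem_smul_set_iff_inv_smul_mem]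

/-- A bounded harmonic function is invariant almost everywhere under the steps of the walk: by
stationarity, the integral of `(ψ (g⁻¹ • y) - ψ y)²` against `μ ⊗ ν` expands to
`∫ ψ² - 2 ∫ ψ² + ∫ ψ² = 0`. -/
lemma harmonic_invariant [IsProbabilityMeasure μ] {ν : Measure Y} [IsProbabilityMeasure ν]
    (hK : MeasurePreserving (fun p : G × Y => p.1⁻¹ • p.2) (μ.prod ν) ν)
    {ψ : Y → ℝ} (hψ : Measurable ψ) (h0 : ∀ y, 0 ≤ ψ y) (h1 : ∀ y, ψ y ≤ 1)
    (hharm : ∀ y, ψ y = ∫ g, ψ ((g : G)⁻¹ • y) ∂μ) :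
    ∀ᵐ p ∂(μ.prod ν), ψ (p.1⁻¹ • p.2) = ψ p.2 := by
  have hKm : Measurable fun p : G × Y => ψ (p.1⁻¹ • p.2) := hψ.comp hK.measurable
  have hsm : Measurable fun p : G × Y => ψ p.2 := hψ.comp measurable_snd
  have hb : ∀ y, ‖ψ y‖ ≤ 1 := fun y => by
    rw [Real.norm_eq_abs, abs_le]; exact ⟨by linarith [h0 y], h1 y⟩
  have hint : ∀ f h : G × Y → ℝ, Measurable f → Measurable h → (∀ p, ‖f p‖ ≤ 1) →
      (∀ p, ‖h p‖ ≤ 1) → Integrable (fun p => f p * h p) (μ.prod ν) := by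
    intro f h hf hh hf1 hh1
    refine Integrable.of_bound (hf.mul hh).aestronglyMeasurable 1 (ae_of_all _ fun p => ?_)
    rw [norm_mul]
    exact mul_le_one₀ (hf1 p) (norm_nonneg _) (hh1 p)
  have i1 := hint _ _ hKm hKm (fun p => hb _) (fun p => hb _)
  have i2 := hint _ _ hKm hsm (fun p => hb _) (fun p => hb _)
  have i3 := hint _ _ hsm hsm (fun p => hb _) (fun p => hb _)
  have e1 : ∫ p, ψ (p.1⁻¹ • p.2) * ψ (p.1⁻¹ • p.2) ∂(μ.prod ν) = ∫ y, ψ y * ψ y ∂ν := by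
    conv_rhs => rw [← hK.map_eq]
    rw [integral_map hK.measurable.aemeasurable (f := fun y => ψ y * ψ y)
      (hψ.mul hψ).aestronglyMeasurable]
  have e2 : ∫ p, ψ (p.1⁻¹ • p.2) * ψ p.2 ∂(μ.prod ν) = ∫ y, ψ y * ψ y ∂ν := by
    rw [integral_prod_symm _ i2]
    refine integral_congr_ae (ae_of_all _ fun y => ?_)
    simp only
    rw [integral_mul_const, ← hharm]
  have e3 : ∫ p : G × Y, ψ p.2 * ψ p.2 ∂(μ.prod ν) = ∫ y, ψ y * ψ y ∂ν := by
    rw [integral_prod_symm _ i3]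
    simp
  have hexp : (fun p : G × Y => (ψ (p.1⁻¹ • p.2) - ψ p.2) ^ 2) = fun p =>
      (ψ (p.1⁻¹ • p.2) * ψ (p.1⁻¹ • p.2) - 2 * (ψ (p.1⁻¹ • p.2) * ψ p.2)) + ψ p.2 * ψ p.2 := by
    ext p; ring
  have hsq_int : Integrable (fun p : G × Y => (ψ (p.1⁻¹ • p.2) - ψ p.2) ^ 2) (μ.prod ν) := by
    rw [hexp]; exact (i1.sub (i2.const_mul 2)).add i3
  have hzero : ∫ p, (ψ (p.1⁻¹ • p.2) - ψ p.2) ^ 2 ∂(μ.prod ν) = 0 := by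
    rw [hexp, integral_add (f := fun p : G × Y =>
        ψ (p.1⁻¹ • p.2) * ψ (p.1⁻¹ • p.2) - 2 * (ψ (p.1⁻¹ • p.2) * ψ p.2))
        (i1.sub (i2.const_mul 2)) i3, integral_sub i1 (i2.const_mul 2),
      integral_const_mul, e1, e2, e3]
    ring
  rw [integral_eq_zero_iff_of_nonneg (fun p => sq_nonneg _) hsq_int] at hzero
  filter_upwards [hzero] with p hp
  have : (ψ (p.1⁻¹ • p.2) - ψ p.2) ^ 2 = 0 := hp
  exact sub_eq_zero.1 (pow_eq_zero_iff two_ne_zero |>.1 this)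

/-- A density that is invariant under the steps of the walk is constant almost everywhere when the
stationary measure is unique, since the measure with that density is again stationary. -/
lemma invariant_density_const [SFinite μ] {ν : Measure Y} [IsProbabilityMeasure ν]
    (hK : MeasurePreserving (fun p : G × Y => p.1⁻¹ • p.2) (μ.prod ν) ν)
    (huniq : ∀ ν' : Measure Y, IsProbabilityMeasure ν' →
      (∀ A : Set Y, MeasurableSet A → ν' A = ∑' g : G, μ {g} * ν' (g • A)) → ν' = ν)
    {φ : Y → ℝ≥0∞} (hφ : Measurable φ)
    (hinv : ∀ᵐ p ∂(μ.prod ν), φ (p.1⁻¹ • p.2) = φ p.2)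
    (hc0 : ∫⁻ y, φ y ∂ν ≠ 0) (hc1 : ∫⁻ y, φ y ∂ν ≠ ∞) :
    ∀ᵐ y ∂ν, φ y = ∫⁻ y, φ y ∂ν := by
  set c := ∫⁻ y, φ y ∂ν with hc
  have hf : Measurable fun y => c⁻¹ * φ y := hφ.const_mul _
  have hprob : IsProbabilityMeasure (ν.withDensity fun y => c⁻¹ * φ y) := by
    constructor
    rw [withDensity_apply _ .univ, Measure.restrict_univ, lintegral_const_mul _ hφ, ← hc,
      ENNReal.inv_mul_cancel hc0 hc1]
  have hstat : (ν.withDensity fun y => c⁻¹ * φ y) = ν := by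
    refine huniq _ hprob fun A hA => ?_
    rw [← prod_preimage_inv_smul hK.measurable _ hA, prod_withDensity_right hf,
      withDensity_apply _ (hK.measurable hA), withDensity_apply _ hA]
    have hswap : ∫⁻ p in (fun p : G × Y => p.1⁻¹ • p.2) ⁻¹' A, c⁻¹ * φ p.2 ∂(μ.prod ν) =
        ∫⁻ p in (fun p : G × Y => p.1⁻¹ • p.2) ⁻¹' A, c⁻¹ * φ (p.1⁻¹ • p.2) ∂(μ.prod ν) := by
      refine lintegral_congr_ae (ae_restrict_of_ae ?_)
      filter_upwards [hinv] with p hp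
      rw [hp]
    rw [hswap, hK.setLIntegral_comp_preimage hA hf]
  have h1 : (ν.withDensity fun y => c⁻¹ * φ y) = ν.withDensity 1 := by
    rw [hstat, withDensity_one]
  have h2 := (withDensity_eq_iff_of_sigmaFinite hf.aemeasurable aemeasurable_one).1 h1
  filter_upwards [h2] with y hy
  have hy' : c⁻¹ * φ y = 1 := hy
  calc φ y = c * (c⁻¹ * φ y) := by
        rw [← mul_assoc, ENNReal.mul_inv_cancel hc0 hc1, one_mul]
    _ = c := by rw [hy', mul_one]

/-! ### Fibres of an invariant set -/

/-- If almost every fibre of an invariant set `E` has `ℙ`-measure `c`, then almost every fibre is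
independent of any given event of `Ω`. On cylinders this follows by induction on the length,
peeling off the first letter by means of the invariance of `E`. -/
lemma fibre_independent [IsProbabilityMeasure μ] {ν : Measure Y} [IsProbabilityMeasure ν]
    (hK : MeasurePreserving (fun p : G × Y => p.1⁻¹ • p.2) (μ.prod ν) ν)
    {ℙ : Measure (ℕ → G)} [IsProbabilityMeasure ℙ]
    (hℙ : ∀ (s : Finset ℕ) (B : ℕ → Set G),
      ℙ {ω | ∀ i ∈ s, ω i ∈ B i} = ∏ i ∈ s, μ (B i))
    {E : Set ((ℕ → G) × Y)} (hE : MeasurableSet E)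
    (hcons : ∀ g ω y, (consSeq (g, ω), y) ∈ E ↔ (ω, g⁻¹ • y) ∈ E)
    {c : ℝ≥0∞} (hc : ∀ᵐ y ∂ν, ℙ {ω | (ω, y) ∈ E} = c)
    {C : Set (ℕ → G)} (hC : MeasurableSet C) :
    ∀ᵐ y ∂ν, ℙ ({ω | (ω, y) ∈ E} ∩ C) = c * ℙ C := by
  have hEy : ∀ y, MeasurableSet {ω | (ω, y) ∈ E} := fun y => measurable_prodMk_right hE
  have hcyl_meas : ∀ (n : ℕ) (B : ℕ → Set G),
      MeasurableSet {ω : ℕ → G | ∀ i ∈ Finset.range n, ω i ∈ B i} := fun n B =>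
    MeasurableSet.pi (s := (Finset.range n : Set ℕ)) (Finset.countable_toSet _)
      fun i _ => .of_discrete
  have hcyl : ∀ (n : ℕ) (B : ℕ → Set G),
      ∀ᵐ y ∂ν, ℙ ({ω | (ω, y) ∈ E} ∩ {ω | ∀ i ∈ Finset.range n, ω i ∈ B i}) =
        c * ℙ {ω | ∀ i ∈ Finset.range n, ω i ∈ B i} := by
    intro n
    induction n with
    | zero =>
      intro B
      filter_upwards [hc] with y hy
      simp [hy]
    | succ n ih =>
      intro B
      set C' := {ω : ℕ → G | ∀ i ∈ Finset.range n, ω i ∈ B (i + 1)} with hC'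
      have hgood : ∀ᵐ p ∂(μ.prod ν),
          ℙ ({ω | (ω, p.1⁻¹ • p.2) ∈ E} ∩ C') = c * ℙ C' :=
        hK.quasiMeasurePreserving.ae (ih fun i => B (i + 1))
      have hgood' : ∀ᵐ y ∂ν, ∀ᵐ g ∂μ, ℙ ({ω | (ω, g⁻¹ • y) ∈ E} ∩ C') = c * ℙ C' := by
        have := (Measure.measurePreserving_swap (μ := ν) (ν := μ)).quasiMeasurePreserving.ae hgood
        exact Measure.ae_ae_of_ae_prod this
      filter_upwards [hgood'] with y hy
      have hsec : ∀ g : G, {ω | consSeq (g, ω) ∈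
          {ω | (ω, y) ∈ E} ∩ {ω | ∀ i ∈ Finset.range (n + 1), ω i ∈ B i}} =
            {ω | g ∈ B 0 ∧ ω ∈ {ω | (ω, g⁻¹ • y) ∈ E} ∩ C'} := by
        intro g
        ext ω
        have := Set.ext_iff.1 (consSeq_preimage_cylinder n B) (g, ω)
        simp only [Set.mem_preimage, Set.mem_prod] at this
        simp only [Set.mem_ofPred_eq, Set.mem_inter_iff, hcons] at this ⊢
        rw [this]
        simp only [hC', Set.mem_ofPred_eq]
        tauto
      rw [measure_eq_lintegral_consSeq hℙ ((hEy y).inter (hcyl_meas _ _))]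
      have hval : ∀ᵐ g ∂μ, ℙ {ω | consSeq (g, ω) ∈
          {ω | (ω, y) ∈ E} ∩ {ω | ∀ i ∈ Finset.range (n + 1), ω i ∈ B i}} =
            (B 0).indicator (fun _ => c * ℙ C') g := by
        filter_upwards [hy] with g hg
        rw [hsec]
        by_cases h : g ∈ B 0
        · simp only [h, true_and, Set.indicator_of_mem]
          exact hg
        · simp [h]
      rw [lintegral_congr_ae hval, lintegral_indicator_const .of_discrete, hC', hℙ, hℙ,
        Finset.prod_range_succ', mul_assoc]
  induction C, hC using MeasurableSpace.induction_on_inter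
    generateFrom_squareCylinders.symm
    (isPiSystem_squareCylinders (fun _ ↦ MeasurableSpace.isPiSystem_measurableSet) (by simp)) with
  | empty => simp
  | basic t ht =>
    obtain ⟨s, B, -, rfl⟩ := ht
    obtain ⟨n, B', h⟩ := exists_initial_cylinder s B
    rw [h]
    exact hcyl n B'
  | compl t ht ih =>
    filter_upwards [ih, hc] with y hy hcy
    have hcfin : c ≠ ∞ := hcy ▸ measure_ne_top _ _
    have hsplit := measure_inter_add_sdiff (μ := ℙ) {ω | (ω, y) ∈ E} ht
    rw [hy, hcy, add_comm] at hsplit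
    rw [← Set.sdiff_eq, prob_compl_eq_one_sub ht, ENNReal.mul_sub (fun _ _ => hcfin), mul_one]
    exact ENNReal.eq_sub_of_add_eq (ENNReal.mul_ne_top hcfin (measure_ne_top _ _)) hsplit
  | iUnion f hd hf ih =>
    filter_upwards [ae_all_iff.2 ih] with y hy
    rw [Set.inter_iUnion, measure_iUnion (fun i j hij => ((hd hij).mono
      Set.inter_subset_right Set.inter_subset_right)) (fun i => (hEy y).inter (hf i)),
      measure_iUnion hd hf, ← ENNReal.tsum_mul_left]
    exact tsum_congr hy

end Action

/-- if moreover `ν` is the unique `μ̌`-stationary probability measure on `Y`,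
then the skew transformation `T(ω, y) = (Sω, (ω 0)⁻¹ • y)` is ergodic for `ℙ ⊗ ν`. -/
theorem skew_shift_ergodic
    {G : Type*} [Group G] [Countable G] [MeasurableSpace G] [MeasurableSingletonClass G]
    {Y : Type*} [TopologicalSpace Y] [CompactSpace Y] [TopologicalSpace.MetrizableSpace Y]
    [MeasurableSpace Y] [BorelSpace Y]
    [MulAction G Y] (hact : ∀ g : G, Continuous fun y : Y => g • y)
    (μ : Measure G) [IsProbabilityMeasure μ]
    (ν : Measure Y) [IsProbabilityMeasure ν]
    (hstat : ∀ A : Set Y, MeasurableSet A → ν A = ∑' g : G, μ {g} * ν (g • A))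
    (huniq : ∀ ν' : Measure Y, IsProbabilityMeasure ν' →
      (∀ A : Set Y, MeasurableSet A → ν' A = ∑' g : G, μ {g} * ν' (g • A)) → ν' = ν)
    (ℙ : Measure (ℕ → G)) [IsProbabilityMeasure ℙ]
    (hℙ : ∀ (s : Finset ℕ) (B : ℕ → Set G),
      ℙ {ω | ∀ i ∈ s, ω i ∈ B i} = ∏ i ∈ s, μ (B i)) :
    ∀ E : Set ((ℕ → G) × Y), MeasurableSet E →
      (fun p : (ℕ → G) × Y => ((fun n => p.1 (n + 1)), (p.1 0)⁻¹ • p.2)) ⁻¹' E = E →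
      ℙ.prod ν E = 0 ∨ ℙ.prod ν E = 1 := by
  intro E hE hTE
  have hK : Measurable fun p : G × Y => p.1⁻¹ • p.2 :=
    measurable_from_prod_countable_right fun g => (hact g⁻¹).measurable
  have hKν : MeasurePreserving (fun p : G × Y => p.1⁻¹ • p.2) (μ.prod ν) ν := by
    refine ⟨hK, Measure.ext fun A hA => ?_⟩
    rw [Measure.map_apply hK hA, prod_preimage_inv_smul hK ν hA, ← hstat A hA]
  have hcons : ∀ g ω y, (consSeq (g, ω), y) ∈ E ↔ (ω, g⁻¹ • y) ∈ E := by
    intro g ω y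
    conv_lhs => rw [← hTE]
    rfl
  have hEy : ∀ y, MeasurableSet {ω | (ω, y) ∈ E} := fun y => measurable_prodMk_right hE
  have hφ : Measurable fun y => ℙ {ω | (ω, y) ∈ E} := measurable_measure_prodMk_right hE
  have hmE : ℙ.prod ν E = ∫⁻ y, ℙ {ω | (ω, y) ∈ E} ∂ν := Measure.prod_apply_symm hE
  -- The fibre measure is harmonic for the walk `y ↦ g⁻¹ • y`.
  have hharm : ∀ y, ℙ {ω | (ω, y) ∈ E} = ∫⁻ g, ℙ {ω | (ω, (g : G)⁻¹ • y) ∈ E} ∂μ := by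
    intro y
    rw [measure_eq_lintegral_consSeq hℙ (hEy y)]
    simp only [Set.mem_ofPred_eq, hcons]
  have hinv : ∀ᵐ p ∂(μ.prod ν),
      ℙ {ω | (ω, p.1⁻¹ • p.2) ∈ E} = ℙ {ω | (ω, p.2) ∈ E} := by
    have := harmonic_invariant (ψ := fun y => (ℙ {ω | (ω, y) ∈ E}).toReal) hKν
      hφ.ennreal_toReal (fun y => ENNReal.toReal_nonneg)
      (fun y => ENNReal.toReal_le_of_le_ofReal zero_le_one (by simpa using prob_le_one))
      (fun y => by
        rw [integral_toReal Measurable.of_discrete.aemeasurable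
          (ae_of_all _ fun g => measure_lt_top _ _), ← hharm])
    filter_upwards [this] with p hp
    exact (ENNReal.toReal_eq_toReal_iff' (measure_ne_top _ _) (measure_ne_top _ _)).1 hp
  by_cases hc0 : ℙ.prod ν E = 0
  · exact Or.inl hc0
  right
  have hcfin : ℙ.prod ν E ≠ ∞ := measure_ne_top _ _
  have hconst : ∀ᵐ y ∂ν, ℙ {ω | (ω, y) ∈ E} = ℙ.prod ν E := by
    rw [hmE] at hc0 hcfin ⊢
    exact invariant_density_const hKν huniq hφ hinv hc0 hcfin
  -- `E` is independent of every rectangle, hence of itself.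
  have hind : ℙ.prod ν = (ℙ.prod ν E)⁻¹ • (ℙ.prod ν).restrict E := by
    refine Measure.prod_eq fun C B hC hB => ?_
    have hrect : ℙ.prod ν (C ×ˢ B ∩ E) = ℙ.prod ν E * (ℙ C * ν B) := by
      rw [Measure.prod_apply_symm ((hC.prod hB).inter hE)]
      have hsec : ∀ᵐ y ∂ν, ℙ ((fun ω => (ω, y)) ⁻¹' (C ×ˢ B ∩ E)) =
          B.indicator (fun _ => ℙ.prod ν E * ℙ C) y := by
        filter_upwards [fibre_independent hKν hℙ hE hcons hconst hC] with y hy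
        by_cases h : y ∈ B
        · rw [Set.indicator_of_mem h, ← hy]
          congr 1
          ext ω
          simp [h, and_comm]
        · rw [Set.indicator_of_notMem h]
          convert measure_empty (μ := ℙ)
          ext ω
          simp [h]
      rw [lintegral_congr_ae hsec, lintegral_indicator_const hB, mul_assoc]
    rw [Measure.smul_apply, Measure.restrict_apply (hC.prod hB), hrect, smul_eq_mul, ← mul_assoc,
      ENNReal.inv_mul_cancel hc0 hcfin, one_mul]
  have hcompl : ℙ.prod ν Eᶜ = 0 := by
    rw [hind, Measure.smul_apply, Measure.restrict_apply hE.compl]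
    simp
  exact (prob_compl_eq_zero_iff hE).1 hcompl
end

section
/- Let Γ be a countable discrete group, μ a probability measure on Γ whose support generates Γ as a semigroup, and Γ₀ a normal subgroup of Γ of finite index. Consider the random walk Z_n(ω) = ω(0)·ω(1)⋯ω(n−1) on the increment space Ω = Γ^ℕ with the infinite product measure ℙ = μ^⊗ℕ. Then there exists a constant c > 0 such that for ℙ-almost every ω, the proportion (1/n)·#{k ∈ {1,…,n} : Z_k(ω) ∈ Γ₀} converges to c as n → ∞. -/
/-!
The walk `X_k = π (Z_k)` on the finite group `Q = Γ ⧸ Γ₀` is an irreducible Markov chain whose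
transition operator `P h x = ∫ h (x π(g)) dμ(g)` preserves the counting measure. The limit is
`c = 1 / |Q|`, obtained from the Poisson equation and an `L²` law of large numbers.

* *Poisson equation* (`exists_poisson`). By the maximum principle and admissibility, `P h = h` forces
  `h` to be constant. Hence the linear map `h ↦ h - P h + ∑ h` is injective, so surjective, and the
  indicator of the identity coset is `h - P h + c` for some `h`; summing over `Q` gives
  `c = 1 / |Q| > 0`.
* *Martingale decomposition* (`sum_visits_eq`). The number of visits up to time `n` is
  `n c + S_n + O(1)`, where `S_n` is the sum of the bounded martingale differences
  `h (X_{k+1}) - P h (X_k)`.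
* *`L²` bound* (`integral_mart_sq_le`). Orthogonality of the differences gives `E[S_n²] ≤ C² n`.
  Summing over the squares shows that `S_m / m → 0` almost surely along `m = (n + 1)²`.
* *Interpolation.* The number of visits is monotone in `n` and consecutive squares have ratio
  tending to `1`, so convergence along the squares gives convergence along all `n`.
-/

open MeasureTheory Filter Topology
open ProbabilityTheory (iIndepFun iIndepFun_iff_measure_inter_preimage_eq_mul)

namespace VisitFrequency

set_option linter.unusedSectionVars false

variable {Γ : Type*} [Group Γ] [Countable Γ] [MeasurableSpace Γ] [MeasurableSingletonClass Γ]

/-! ### Functions of finitely many increments -/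

/-- `Γ ^ n` is countable, hence discrete, so no regularity of `F` is needed. -/
lemma exists_factor [Nonempty Γ] {F : (ℕ → Γ) → ℝ} {n : ℕ} (hF : DependsOn F (Set.Iio n)) :
    ∃ φ : (Finset.range n → Γ) → ℝ, Measurable φ ∧ F = fun ω => φ (fun i => ω i) := by
  classical
  obtain ⟨a⟩ := ‹Nonempty Γ›
  refine ⟨fun v => F (fun i => if h : i ∈ Finset.range n then v ⟨i, h⟩ else a),
    .of_discrete, ?_⟩
  funext ω
  apply hF
  intro i hi
  have : i < n := hi
  simp [this]

lemma measurable_of_dependsOn [Nonempty Γ] {F : (ℕ → Γ) → ℝ} {n : ℕ}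
    (hF : DependsOn F (Set.Iio n)) : Measurable F := by
  obtain ⟨φ, hφ, rfl⟩ := exists_factor hF
  exact hφ.comp (measurable_pi_lambda _ fun i => measurable_pi_apply _)

lemma map_eval {μ : Measure Γ} {ℙ : Measure (ℕ → Γ)}
    (hℙ : ∀ (s : Finset ℕ) (B : ℕ → Set Γ), ℙ {ω | ∀ i ∈ s, ω i ∈ B i} = ∏ i ∈ s, μ (B i))
    (n : ℕ) : ℙ.map (fun ω => ω n) = μ := by
  ext B hB
  rw [Measure.map_apply (measurable_pi_apply n) hB]
  have := hℙ {n} (fun _ => B)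
  simp only [Finset.mem_singleton, forall_eq, Finset.prod_singleton] at this
  exact this

lemma iIndepFun_eval {μ : Measure Γ} {ℙ : Measure (ℕ → Γ)}
    (hℙ : ∀ (s : Finset ℕ) (B : ℕ → Set Γ), ℙ {ω | ∀ i ∈ s, ω i ∈ B i} = ∏ i ∈ s, μ (B i)) :
    iIndepFun (fun (i : ℕ) (ω : ℕ → Γ) => ω i) ℙ := by
  rw [iIndepFun_iff_measure_inter_preimage_eq_mul]
  intro S B hB
  have h1 : (⋂ i ∈ S, (fun ω : ℕ → Γ => ω i) ⁻¹' B i) = {ω | ∀ i ∈ S, ω i ∈ B i} := by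
    ext ω; simp
  rw [h1, hℙ]
  refine Finset.prod_congr rfl fun i hi => ?_
  rw [← map_eval hℙ i, Measure.map_apply (measurable_pi_apply i) (hB i hi)]

/-- The increment at time `n` is independent of everything before time `n`. -/
lemma integral_past_mul [Nonempty Γ] {μ : Measure Γ} {ℙ : Measure (ℕ → Γ)}
    (hℙ : ∀ (s : Finset ℕ) (B : ℕ → Set Γ), ℙ {ω | ∀ i ∈ s, ω i ∈ B i} = ∏ i ∈ s, μ (B i))
    {F : (ℕ → Γ) → ℝ} {n : ℕ} (hF : DependsOn F (Set.Iio n)) (ψ : Γ → ℝ) :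
    ∫ ω, F ω * ψ (ω n) ∂ℙ = (∫ ω, F ω ∂ℙ) * ∫ g, ψ g ∂μ := by
  have hFm := measurable_of_dependsOn hF
  have hψ : Measurable ψ := .of_discrete
  obtain ⟨φ, hφ, rfl⟩ := exists_factor hF
  have hind := (iIndepFun_eval hℙ).indepFun_finset (Finset.range n) {n} (by simp)
    (fun i => measurable_pi_apply i)
  have hind2 := hind.comp hφ
    (hψ.comp (measurable_pi_apply (⟨n, by simp⟩ : ({n} : Finset ℕ))))
  have := hind2.integral_fun_mul_eq_mul_integral hFm.aestronglyMeasurable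
    (hψ.comp (measurable_pi_apply n)).aestronglyMeasurable
  rw [← map_eval hℙ n, integral_map (measurable_pi_apply n).aemeasurable
    hψ.aestronglyMeasurable]
  exact this

/-! ### The walk on the finite quotient -/

variable (Γ₀ : Subgroup Γ) [Γ₀.Normal]

/-- The position at time `n` of the walk projected to `Γ ⧸ Γ₀`. -/
def pos (n : ℕ) (ω : ℕ → Γ) : Γ ⧸ Γ₀ := (((List.range n).map ω).prod : Γ)

lemma pos_succ (n : ℕ) (ω : ℕ → Γ) : pos Γ₀ (n + 1) ω = pos Γ₀ n ω * (ω n : Γ ⧸ Γ₀) := by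
  simp [pos, List.prod_range_succ]

lemma pos_dependsOn (n : ℕ) : DependsOn (pos Γ₀ n) (Set.Iio n) := by
  intro x y hxy
  unfold pos
  congr 2
  apply List.map_congr_left
  intro i hi
  exact hxy i (by simpa using hi)

/-- The transition operator of the projected walk. -/
noncomputable def trans (μ : Measure Γ) (h : Γ ⧸ Γ₀ → ℝ) (x : Γ ⧸ Γ₀) : ℝ :=
  ∫ g, h (x * (g : Γ ⧸ Γ₀)) ∂μ

variable [Γ₀.FiniteIndex]

lemma exists_bound (h : Γ ⧸ Γ₀ → ℝ) : ∃ C, ∀ x, |h x| ≤ C := by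
  obtain ⟨C, hC⟩ := (Set.finite_range fun x => |h x|).bddAbove
  exact ⟨C, fun x => hC ⟨x, rfl⟩⟩

lemma integrable_step (μ : Measure Γ) [IsFiniteMeasure μ] (h : Γ ⧸ Γ₀ → ℝ) (x : Γ ⧸ Γ₀) :
    Integrable (fun g : Γ => h (x * (g : Γ ⧸ Γ₀))) μ := by
  obtain ⟨C, hC⟩ := exists_bound Γ₀ h
  exact .of_bound (Measurable.of_discrete).aestronglyMeasurable C
    (Eventually.of_forall fun g => hC _)

/-- The maximum principle: the set of maximum points of a harmonic function is stable under the
steps of the walk, so by admissibility it is everything. -/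
lemma harmonic_const {μ : Measure Γ} [IsProbabilityMeasure μ]
    (hadm : Subsemigroup.closure {g : Γ | μ {g} ≠ 0} = ⊤) {h : Γ ⧸ Γ₀ → ℝ}
    (hh : ∀ x, trans Γ₀ μ h x = h x) : ∃ a, ∀ x, h x = a := by
  obtain ⟨x₀, hx₀⟩ := Finite.exists_max h
  have step : ∀ g : Γ, ∀ x, h x = h x₀ → h (x * (g : Γ ⧸ Γ₀)) = h x₀ := by
    intro g
    have hg : g ∈ Subsemigroup.closure {g : Γ | μ {g} ≠ 0} := by simp [hadm]
    induction hg using Subsemigroup.closure_induction with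
    | mem g hg =>
      intro x hx
      have hint := integrable_step Γ₀ μ h x
      have h0 : ∫ g : Γ, (h x₀ - h (x * (g : Γ ⧸ Γ₀))) ∂μ = 0 := by
        rw [integral_sub (integrable_const _) hint]
        have := hh x
        unfold trans at this
        simp [this, hx]
      rw [integral_eq_zero_iff_of_nonneg (fun g => sub_nonneg.2 (hx₀ _))
        ((integrable_const _).sub hint)] at h0
      have := ae_iff_of_countable.1 h0 g hg
      simp only [Pi.zero_apply] at this
      linarith
    | mul a b _ _ iha ihb =>
      intro x hx
      have := ihb _ (iha x hx)
      rwa [mul_assoc] at this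
  refine ⟨h x₀, fun x => ?_⟩
  obtain ⟨g, hg⟩ := QuotientGroup.mk_surjective (x₀⁻¹ * x)
  have := step g x₀ rfl
  rwa [hg, mul_inv_cancel_left] at this

/-- Right translations of the quotient preserve counting measure. -/
lemma sum_trans [Fintype (Γ ⧸ Γ₀)] (μ : Measure Γ) [IsProbabilityMeasure μ] (h : Γ ⧸ Γ₀ → ℝ) :
    ∑ x, trans Γ₀ μ h x = ∑ x, h x := by
  unfold trans
  rw [← integral_finsetSum _ fun x _ => integrable_step Γ₀ μ h x]
  have : ∀ g : Γ, ∑ x, h (x * (g : Γ ⧸ Γ₀)) = ∑ x, h x := fun g =>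
    Equiv.sum_comp (Equiv.mulRight (g : Γ ⧸ Γ₀)) h
  simp [this]

/-- The Poisson equation `f = h - P h + c` for every `f`, where `c` is the mean of `f`. -/
lemma exists_poisson [Fintype (Γ ⧸ Γ₀)] {μ : Measure Γ} [IsProbabilityMeasure μ]
    (hadm : Subsemigroup.closure {g : Γ | μ {g} ≠ 0} = ⊤) (f : Γ ⧸ Γ₀ → ℝ) :
    ∃ (h : Γ ⧸ Γ₀ → ℝ) (c : ℝ), (∀ x, f x = h x - trans Γ₀ μ h x + c) ∧
      ∑ x, f x = Fintype.card (Γ ⧸ Γ₀) * c := by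
  let L : (Γ ⧸ Γ₀ → ℝ) →ₗ[ℝ] (Γ ⧸ Γ₀ → ℝ) :=
    { toFun := fun h x => h x - trans Γ₀ μ h x + ∑ y, h y
      map_add' := by
        intro h k
        funext x
        have : trans Γ₀ μ (h + k) x = trans Γ₀ μ h x + trans Γ₀ μ k x :=
          integral_add (integrable_step Γ₀ μ h x) (integrable_step Γ₀ μ k x)
        simp only [this, Pi.add_apply, Finset.sum_add_distrib]
        ring
      map_smul' := by
        intro a h
        funext x
        have : trans Γ₀ μ (a • h) x = a * trans Γ₀ μ h x :=
          integral_const_mul a _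
        simp only [this, Pi.smul_apply, smul_eq_mul, ← Finset.mul_sum, RingHom.id_apply]
        ring }
  have hL : ∀ h x, L h x = h x - trans Γ₀ μ h x + ∑ y, h y := fun _ _ => rfl
  have hsum : ∀ h, ∑ x, L h x = Fintype.card (Γ ⧸ Γ₀) * ∑ y, h y := by
    intro h
    simp only [hL, Finset.sum_add_distrib, Finset.sum_sub_distrib, sum_trans]
    simp
  have hcard : (Fintype.card (Γ ⧸ Γ₀) : ℝ) ≠ 0 := by simp
  have hinj : Function.Injective L := by
    rw [injective_iff_map_eq_zero]
    intro h h0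
    have hs : ∑ y, h y = 0 := by
      have := hsum h
      simp only [h0, Pi.zero_apply, Finset.sum_const_zero] at this
      simpa [hcard] using this.symm
    obtain ⟨a, ha⟩ := harmonic_const Γ₀ hadm (h := h) (fun x => by
      have := hL h x
      rw [h0, hs, Pi.zero_apply] at this
      linarith)
    simp only [ha, Finset.sum_const, Finset.card_univ, nsmul_eq_mul] at hs
    have : a = 0 := by simpa [hcard] using hs
    funext x
    simp [ha, this]
  obtain ⟨h, rfl⟩ := LinearMap.injective_iff_surjective.1 hinj f
  exact ⟨h, ∑ y, h y, hL h, hsum h⟩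

/-! ### The martingale part -/

/-- The martingale `S_n = ∑_{k < n} (h (X_{k+1}) - P h (X_k))`. -/
noncomputable def mart (μ : Measure Γ) (h : Γ ⧸ Γ₀ → ℝ) (n : ℕ) (ω : ℕ → Γ) : ℝ :=
  ∑ k ∈ Finset.range n, (h (pos Γ₀ (k + 1) ω) - trans Γ₀ μ h (pos Γ₀ k ω))

lemma mart_dependsOn (μ : Measure Γ) (h : Γ ⧸ Γ₀ → ℝ) (n : ℕ) :
    DependsOn (mart Γ₀ μ h n) (Set.Iio n) := by
  intro x y hxy
  refine Finset.sum_congr rfl fun k hk => ?_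
  have hk : k < n := by simpa using hk
  rw [pos_dependsOn Γ₀ (k + 1) fun i hi => hxy i (Set.mem_Iio.2 (lt_of_lt_of_le (Set.mem_Iio.1 hi) hk)),
    pos_dependsOn Γ₀ k fun i hi => hxy i (Set.mem_Iio.2 (lt_trans (Set.mem_Iio.1 hi) hk))]

/-- A martingale difference is orthogonal to every function of the past: condition on the value of
`X_n`, and use the independence of the next increment. -/
lemma integral_past_mul_diff {μ : Measure Γ} [IsProbabilityMeasure μ]
    {ℙ : Measure (ℕ → Γ)} [IsProbabilityMeasure ℙ]
    (hℙ : ∀ (s : Finset ℕ) (B : ℕ → Set Γ), ℙ {ω | ∀ i ∈ s, ω i ∈ B i} = ∏ i ∈ s, μ (B i))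
    (h : Γ ⧸ Γ₀ → ℝ) {n : ℕ} {F : (ℕ → Γ) → ℝ} (hF : DependsOn F (Set.Iio n)) {K : ℝ}
    (hK : ∀ ω, |F ω| ≤ K) :
    ∫ ω, F ω * (h (pos Γ₀ (n + 1) ω) - trans Γ₀ μ h (pos Γ₀ n ω)) ∂ℙ = 0 := by
  classical
  have := Fintype.ofFinite (Γ ⧸ Γ₀)
  have hK0 : 0 ≤ K := (abs_nonneg _).trans (hK fun _ => 1)
  let G : Γ ⧸ Γ₀ → (ℕ → Γ) → ℝ := fun x ω => if pos Γ₀ n ω = x then F ω else 0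
  let ψ : Γ ⧸ Γ₀ → Γ → ℝ := fun x g => h (x * (g : Γ ⧸ Γ₀)) - trans Γ₀ μ h x
  have hG : ∀ x, DependsOn (G x) (Set.Iio n) := by
    intro x ω ω' hω
    simp only [G, hF hω, pos_dependsOn Γ₀ n hω]
  have hGK : ∀ x ω, |G x ω| ≤ K := by
    intro x ω
    simp only [G]
    split_ifs
    · exact hK ω
    · simpa using hK0
  have hψ0 : ∀ x, ∫ g, ψ x g ∂μ = 0 := by
    intro x
    simp only [ψ]
    rw [integral_sub (integrable_step Γ₀ μ h x) (integrable_const _)]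
    simp [trans]
  have hint : ∀ x, Integrable (fun ω => G x ω * ψ x (ω n)) ℙ := by
    intro x
    obtain ⟨C, hC⟩ := exists_bound Γ₀ h
    refine .of_bound ((measurable_of_dependsOn (hG x)).mul
      ((Measurable.of_discrete (f := ψ x)).comp (measurable_pi_apply n))).aestronglyMeasurable
      (K * (C + |trans Γ₀ μ h x|)) (Eventually.of_forall fun ω => ?_)
    rw [Real.norm_eq_abs, abs_mul]
    refine mul_le_mul (hGK x ω) ?_ (abs_nonneg _) hK0
    exact (abs_sub _ _).trans (add_le_add_left (hC _) _)
  have hdec : (fun ω => F ω * (h (pos Γ₀ (n + 1) ω) - trans Γ₀ μ h (pos Γ₀ n ω)))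
      = fun ω => ∑ x, G x ω * ψ x (ω n) := by
    funext ω
    simp [G, ψ, pos_succ]
  rw [hdec, integral_finsetSum _ fun x _ => hint x]
  refine Finset.sum_eq_zero fun x _ => ?_
  rw [integral_past_mul hℙ (hG x), hψ0, mul_zero]

lemma exists_diff_bound (μ : Measure Γ) (h : Γ ⧸ Γ₀ → ℝ) :
    ∃ C, ∀ x y : Γ ⧸ Γ₀, |h x - trans Γ₀ μ h y| ≤ C := by
  obtain ⟨C, hC⟩ := exists_bound Γ₀ h
  obtain ⟨C', hC'⟩ := exists_bound Γ₀ (trans Γ₀ μ h)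
  exact ⟨C + C', fun x y => (abs_sub _ _).trans (add_le_add (hC x) (hC' y))⟩

lemma abs_mart_le {μ : Measure Γ} {h : Γ ⧸ Γ₀ → ℝ} {C : ℝ}
    (hC : ∀ x y : Γ ⧸ Γ₀, |h x - trans Γ₀ μ h y| ≤ C) (n : ℕ) (ω : ℕ → Γ) :
    |mart Γ₀ μ h n ω| ≤ n * C := by
  refine (Finset.abs_sum_le_sum_abs _ _).trans ?_
  refine (Finset.sum_le_sum fun k _ => hC _ _).trans ?_
  simp

lemma integrable_mart_sq (μ : Measure Γ) (ℙ : Measure (ℕ → Γ)) [IsProbabilityMeasure ℙ]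
    (h : Γ ⧸ Γ₀ → ℝ) (n : ℕ) : Integrable (fun ω => mart Γ₀ μ h n ω ^ 2) ℙ := by
  obtain ⟨C, hC⟩ := exists_diff_bound Γ₀ μ h
  refine .of_bound ((measurable_of_dependsOn
    (mart_dependsOn Γ₀ μ h n)).pow_const 2).aestronglyMeasurable
    ((n * C) ^ 2) (Eventually.of_forall fun ω => ?_)
  rw [Real.norm_eq_abs, abs_pow]
  exact pow_le_pow_left₀ (abs_nonneg _) (abs_mart_le Γ₀ hC n ω) 2

lemma integral_mart_sq_le {μ : Measure Γ} [IsProbabilityMeasure μ]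
    {ℙ : Measure (ℕ → Γ)} [IsProbabilityMeasure ℙ]
    (hℙ : ∀ (s : Finset ℕ) (B : ℕ → Set Γ), ℙ {ω | ∀ i ∈ s, ω i ∈ B i} = ∏ i ∈ s, μ (B i))
    {h : Γ ⧸ Γ₀ → ℝ} {C : ℝ} (hC : ∀ x y : Γ ⧸ Γ₀, |h x - trans Γ₀ μ h y| ≤ C) (n : ℕ) :
    ∫ ω, mart Γ₀ μ h n ω ^ 2 ∂ℙ ≤ n * C ^ 2 := by
  induction n with
  | zero => simp [mart]
  | succ n ih =>
    have hC0 : 0 ≤ C := (abs_nonneg _).trans (hC 1 1)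
    let D : (ℕ → Γ) → ℝ := fun ω => h (pos Γ₀ (n + 1) ω) - trans Γ₀ μ h (pos Γ₀ n ω)
    have hsucc : ∀ ω, mart Γ₀ μ h (n + 1) ω = mart Γ₀ μ h n ω + D ω := fun ω =>
      Finset.sum_range_succ _ _
    have hDm : Measurable D := by
      have : D = fun ω => mart Γ₀ μ h (n + 1) ω - mart Γ₀ μ h n ω := by
        funext ω; rw [hsucc]; ring
      rw [this]
      exact (measurable_of_dependsOn (mart_dependsOn Γ₀ μ h _)).sub
        (measurable_of_dependsOn (mart_dependsOn Γ₀ μ h _))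
    have horth : ∫ ω, mart Γ₀ μ h n ω * D ω ∂ℙ = 0 :=
      integral_past_mul_diff Γ₀ hℙ h (mart_dependsOn Γ₀ μ h n) (abs_mart_le Γ₀ hC n)
    have hi1 : Integrable (fun ω => mart Γ₀ μ h n ω * D ω) ℙ := by
      refine .of_bound ((measurable_of_dependsOn
        (mart_dependsOn Γ₀ μ h n)).mul hDm).aestronglyMeasurable
        (n * C * C) (Eventually.of_forall fun ω => ?_)
      rw [Real.norm_eq_abs, abs_mul]
      exact mul_le_mul (abs_mart_le Γ₀ hC n ω) (hC _ _) (abs_nonneg _) (by positivity)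
    have hDb : ∀ ω, D ω ^ 2 ≤ C ^ 2 := fun ω => sq_le_sq' (abs_le.1 (hC _ _)).1 (abs_le.1 (hC _ _)).2
    have hi0 := integrable_mart_sq Γ₀ μ ℙ h n
    calc ∫ ω, mart Γ₀ μ h (n + 1) ω ^ 2 ∂ℙ
        ≤ ∫ ω, (mart Γ₀ μ h n ω ^ 2 + 2 * (mart Γ₀ μ h n ω * D ω) + C ^ 2) ∂ℙ := by
          refine integral_mono (integrable_mart_sq Γ₀ μ ℙ h (n + 1))
            ((hi0.add (hi1.const_mul 2)).add (integrable_const _)) fun ω => ?_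
          have := hDb ω
          simp only [hsucc]
          nlinarith
      _ = ∫ ω, mart Γ₀ μ h n ω ^ 2 ∂ℙ + C ^ 2 := by
          have hi2 : Integrable
              (fun ω => mart Γ₀ μ h n ω ^ 2 + 2 * (mart Γ₀ μ h n ω * D ω)) ℙ :=
            hi0.add (hi1.const_mul 2)
          rw [integral_add hi2 (integrable_const _),
            integral_add hi0 (hi1.const_mul 2), integral_const_mul, horth]
          simp
      _ ≤ (n + 1 : ℕ) * C ^ 2 := by push_cast; linarith

/-- Along the squares `m = (n + 1)²` the second moments of `S_m / m` are at most `C² / (n + 1)²`,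
which is summable. -/
lemma ae_tendsto_mart_sq {μ : Measure Γ} [IsProbabilityMeasure μ]
    {ℙ : Measure (ℕ → Γ)} [IsProbabilityMeasure ℙ]
    (hℙ : ∀ (s : Finset ℕ) (B : ℕ → Set Γ), ℙ {ω | ∀ i ∈ s, ω i ∈ B i} = ∏ i ∈ s, μ (B i))
    (h : Γ ⧸ Γ₀ → ℝ) :
    ∀ᵐ ω ∂ℙ, Tendsto (fun n : ℕ => mart Γ₀ μ h ((n + 1) ^ 2) ω / (((n + 1) ^ 2 : ℕ) : ℝ))
      atTop (𝓝 0) := by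
  obtain ⟨C, hC⟩ := exists_diff_bound Γ₀ μ h
  let Y : ℕ → (ℕ → Γ) → ℝ := fun n ω => mart Γ₀ μ h ((n + 1) ^ 2) ω / (((n + 1) ^ 2 : ℕ) : ℝ)
  have hYm : ∀ n, Measurable fun ω => ENNReal.ofReal (Y n ω ^ 2) := fun n =>
    (((measurable_of_dependsOn (mart_dependsOn Γ₀ μ h _)).div_const _).pow_const 2).ennreal_ofReal
  have hle : ∀ n, ∫⁻ ω, ENNReal.ofReal (Y n ω ^ 2) ∂ℙ
      ≤ ENNReal.ofReal (C ^ 2 * (1 / ((n + 1 : ℕ) : ℝ) ^ 2)) := by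
    intro n
    have hY : ∀ ω, Y n ω ^ 2 = (((n + 1 : ℕ) : ℝ) ^ 4)⁻¹ * mart Γ₀ μ h ((n + 1) ^ 2) ω ^ 2 := by
      intro ω
      simp only [Y]
      push_cast
      field_simp
    have hint : Integrable (fun ω => Y n ω ^ 2) ℙ := by
      simp only [hY]
      exact (integrable_mart_sq Γ₀ μ ℙ h _).const_mul _
    rw [← ofReal_integral_eq_lintegral_ofReal hint (Eventually.of_forall fun ω => sq_nonneg _)]
    apply ENNReal.ofReal_le_ofReal
    simp only [hY]
    rw [integral_const_mul]
    have := integral_mart_sq_le Γ₀ hℙ hC ((n + 1) ^ 2)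
    have hpos : (0 : ℝ) < ((n + 1 : ℕ) : ℝ) := by positivity
    calc _ ≤ (((n + 1 : ℕ) : ℝ) ^ 4)⁻¹ * (((n + 1) ^ 2 : ℕ) * C ^ 2) := by gcongr
      _ = C ^ 2 * (1 / ((n + 1 : ℕ) : ℝ) ^ 2) := by push_cast; field_simp
  have hsummable : Summable fun n : ℕ => C ^ 2 * (1 / ((n + 1 : ℕ) : ℝ) ^ 2) :=
    ((summable_nat_add_iff 1).2
      (Real.summable_one_div_nat_pow.2 one_lt_two)).mul_left _
  have hfin : ∫⁻ ω, ∑' n, ENNReal.ofReal (Y n ω ^ 2) ∂ℙ ≠ ⊤ := by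
    rw [lintegral_tsum fun n => (hYm n).aemeasurable]
    exact ne_top_of_le_ne_top hsummable.tsum_ofReal_ne_top (ENNReal.tsum_le_tsum hle)
  filter_upwards [ae_lt_top (Measurable.tsum hYm) hfin] with ω hω
  have h1 := ENNReal.tendsto_atTop_zero_of_tsum_ne_top hω.ne
  have h2 : Tendsto (fun n => Y n ω ^ 2) atTop (𝓝 0) := by
    have := (ENNReal.tendsto_toReal ENNReal.zero_ne_top).comp h1
    simpa [Function.comp_def, ENNReal.toReal_ofReal, sq_nonneg] using this
  have h3 := h2.sqrt
  simp only [Real.sqrt_sq_eq_abs, Real.sqrt_zero] at h3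
  exact (tendsto_zero_iff_abs_tendsto_zero _).2 h3

/-! ### Counting visits -/

/-- Rewrite `h (X_{k+1}) - P h (X_{k+1})` as a martingale difference plus the telescoping term
`P h (X_k) - P h (X_{k+1})`. -/
lemma sum_visits_eq {μ : Measure Γ} {f h : Γ ⧸ Γ₀ → ℝ} {c : ℝ}
    (hf : ∀ x, f x = h x - trans Γ₀ μ h x + c) (n : ℕ) (ω : ℕ → Γ) :
    ∑ k ∈ Finset.range n, f (pos Γ₀ (k + 1) ω)
      = n * c + mart Γ₀ μ h n ω
        + (trans Γ₀ μ h (pos Γ₀ 0 ω) - trans Γ₀ μ h (pos Γ₀ n ω)) := by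
  induction n with
  | zero => simp [mart]
  | succ n ih =>
    have : mart Γ₀ μ h (n + 1) ω = mart Γ₀ μ h n ω +
      (h (pos Γ₀ (n + 1) ω) - trans Γ₀ μ h (pos Γ₀ n ω)) := Finset.sum_range_succ _ _
    rw [Finset.sum_range_succ, ih, hf, this]
    push_cast
    ring

lemma ncard_visits [DecidableEq (Γ ⧸ Γ₀)] (n : ℕ) (ω : ℕ → Γ) :
    (Set.ncard {k : ℕ | 1 ≤ k ∧ k ≤ n ∧ ((List.range k).map ω).prod ∈ Γ₀} : ℝ)
      = ∑ k ∈ Finset.range n, if pos Γ₀ (k + 1) ω = 1 then (1 : ℝ) else 0 := by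
  have h1 : {k : ℕ | 1 ≤ k ∧ k ≤ n ∧ ((List.range k).map ω).prod ∈ Γ₀}
      = (((Finset.range n).filter fun k => pos Γ₀ (k + 1) ω = 1).map
          ⟨(· + 1), add_left_injective 1⟩ : Finset ℕ) := by
    ext k
    have hpos : ∀ j, pos Γ₀ j ω = 1 ↔ ((List.range j).map ω).prod ∈ Γ₀ := fun j =>
      QuotientGroup.eq_one_iff _
    rw [Finset.mem_coe, Finset.mem_map]
    simp only [Set.mem_ofPred_eq, Finset.mem_filter, Finset.mem_range,
      Function.Embedding.coeFn_mk, hpos]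
    constructor
    · rintro ⟨hk1, hkn, hk⟩
      exact ⟨k - 1, ⟨by omega, by rwa [Nat.sub_add_cancel hk1]⟩, Nat.sub_add_cancel hk1⟩
    · rintro ⟨j, ⟨hj, hm⟩, rfl⟩
      exact ⟨by omega, by omega, hm⟩
  rw [h1, Set.ncard_coe_finset, Finset.card_map, Finset.sum_boole]

/-- Consecutive squares have ratio tending to `1`. -/
lemma eventually_succ_sq_le {a : ℝ} (ha : 1 < a) :
    ∀ᶠ n : ℕ in atTop, (((n + 1 + 1) ^ 2 : ℕ) : ℝ) ≤ a * (((n + 1) ^ 2 : ℕ) : ℝ) := by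
  have h0 : Tendsto (fun n : ℕ => (1 + 1 / ((n : ℝ) + 1)) ^ 2) atTop (𝓝 ((1 + 0) ^ 2)) :=
    (tendsto_const_nhds.add tendsto_one_div_add_atTop_nhds_zero_nat).pow 2
  filter_upwards [h0.eventually_lt_const (by simpa using ha)] with n hn
  have : (((n + 1 + 1) ^ 2 : ℕ) : ℝ) = (1 + 1 / ((n : ℝ) + 1)) ^ 2 * (((n + 1) ^ 2 : ℕ) : ℝ) := by
    push_cast
    field_simp
  rw [this]
  gcongr

end VisitFrequency

/-- for an admissible random walk on a countable group `Γ` and a finite-index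
normal subgroup `Γ₀ ⊴ Γ`, almost surely the proportion of times `k ∈ {1, …, n}` with
`Z_k ∈ Γ₀` converges to a positive constant `c`. -/
theorem frequency_of_visits_to_finite_index_subgroup
    {Γ : Type*} [Group Γ] [Countable Γ] [MeasurableSpace Γ] [MeasurableSingletonClass Γ]
    (μ : Measure Γ) [IsProbabilityMeasure μ]
    (hadm : Subsemigroup.closure {g : Γ | μ {g} ≠ 0} = ⊤)
    (Γ₀ : Subgroup Γ) [Γ₀.Normal] [Γ₀.FiniteIndex]
    (ℙ : Measure (ℕ → Γ)) [IsProbabilityMeasure ℙ]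
    (hℙ : ∀ (s : Finset ℕ) (B : ℕ → Set Γ),
      ℙ {ω | ∀ i ∈ s, ω i ∈ B i} = ∏ i ∈ s, μ (B i)) :
    ∃ c : ℝ, 0 < c ∧ ∀ᵐ ω ∂ℙ, Tendsto
      (fun n : ℕ =>
        (Set.ncard {k : ℕ | 1 ≤ k ∧ k ≤ n ∧ ((List.range k).map ω).prod ∈ Γ₀} : ℝ) / n)
      atTop (𝓝 c) := by
  classical
  have := Fintype.ofFinite (Γ ⧸ Γ₀)
  obtain ⟨h, c, hf, hsum⟩ := VisitFrequency.exists_poisson Γ₀ hadm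
    (fun x : Γ ⧸ Γ₀ => if x = 1 then (1 : ℝ) else 0)
  have hc : 0 < c := by
    rw [Finset.sum_ite_eq' Finset.univ (1 : Γ ⧸ Γ₀) fun _ => (1 : ℝ),
      if_pos (Finset.mem_univ _)] at hsum
    exact pos_of_mul_pos_right (hsum ▸ one_pos) (Nat.cast_nonneg _)
  refine ⟨c, hc, ?_⟩
  filter_upwards [VisitFrequency.ae_tendsto_mart_sq Γ₀ hℙ h] with ω hω
  simp only [VisitFrequency.ncard_visits]
  have hsq : Tendsto (fun n : ℕ => (n + 1) ^ 2) atTop atTop :=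
    (tendsto_pow_atTop two_ne_zero).comp (tendsto_add_atTop_nat 1)
  apply tendsto_div_of_monotone_of_exists_subseq_tendsto_div
  · refine monotone_nat_of_le_succ fun n => ?_
    rw [Finset.sum_range_succ]
    have : (0 : ℝ) ≤ if VisitFrequency.pos Γ₀ (n + 1) ω = 1 then 1 else 0 := by
      split_ifs <;> norm_num
    linarith
  · intro a ha
    refine ⟨fun n => (n + 1) ^ 2, VisitFrequency.eventually_succ_sq_le ha, hsq, ?_⟩
    obtain ⟨C, hC⟩ := VisitFrequency.exists_bound Γ₀ (VisitFrequency.trans Γ₀ μ h)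
    -- The boundary term of the telescoping sum is bounded by `2 C`.
    have hbdry : Tendsto (fun n : ℕ =>
        (VisitFrequency.trans Γ₀ μ h (VisitFrequency.pos Γ₀ 0 ω)
          - VisitFrequency.trans Γ₀ μ h (VisitFrequency.pos Γ₀ ((n + 1) ^ 2) ω))
          / (((n + 1) ^ 2 : ℕ) : ℝ)) atTop (𝓝 0) := by
      have hlim : Tendsto (fun n : ℕ => (C + C) / (((n + 1) ^ 2 : ℕ) : ℝ)) atTop (𝓝 0) :=
        (tendsto_const_div_atTop_nhds_zero_nat (C + C)).comp hsq
      refine squeeze_zero_norm (fun n => ?_) hlim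
      rw [Real.norm_eq_abs, abs_div, Nat.abs_cast]
      gcongr
      exact (abs_sub _ _).trans (add_le_add (hC _) (hC _))
    have hlim := (tendsto_const_nhds (x := c)).add (hω.add hbdry)
    simp only [add_zero] at hlim
    refine hlim.congr fun n => ?_
    rw [VisitFrequency.sum_visits_eq Γ₀ hf]
    have : (((n + 1) ^ 2 : ℕ) : ℝ) ≠ 0 := by positivity
    field_simp
    ring
end

section
/- Let Γ be a countable discrete group acting by isometries on a metric space (X, d), and fix o ∈ X. Let μ be a probability measure on Γ with finite first moment, i.e. ∑_{g∈Γ} μ({g})·d(g•o, o) < ∞. Consider the random walk Z_n(ω) = ω(0)·ω(1)⋯ω(n−1) on the increment space Ω = Γ^ℕ with the infinite product measure ℙ = μ^⊗ℕ. Let λ = inf_{n≥1} (1/n)·∫_Ω d(Z_n(ω)•o, o) dℙ(ω). Then λ is finite and for ℙ-almost every ω ∈ Ω, (1/n)·d(Z_n(ω)•o, o) converges to λ as n → ∞. -/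
/-!
The displacement `|Zₙ| = d(Zₙ o, o)` is a subadditive cocycle over the shift on the increments:
`|Zₘ₊ₙ(ω)| ≤ |Zₘ(ω)| + |Zₙ(Tᵐ ω)|`.

*Upper bound.* Cutting the walk into blocks of length `m`, the block displacements are i.i.d. and
integrable, so the strong law of large numbers gives `limsup |Zₙ| / n ≤ E|Zₘ| / m` almost surely
for every `m ≥ 1` (`ae_eventually_walkLen_lt`), hence `limsup |Zₙ| / n ≤ λ`.

*Lower bound.* Let `ℓ = liminf |Zₙ| / n`, which satisfies `ℓ ∘ T ≤ ℓ`. Given `ε > 0`, almost every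
`ω` has some `N ≥ 1` with `|Z_N(ω)| ≤ N (ℓ(ω) + ε)`, and the set `B_K` where no `N ≤ K` works shrinks
to the empty set as `K → ∞`. Following these blocks greedily bounds `|Zₙ|` by `n (ℓ + ε)` plus the
increments at times in `B_K` plus the last `K` increments (`subadditive_greedy_bound`).
Integrating this yields `λ ≤ ∫ ℓ` (`le_lintegral_liminf`).

Since `ℓ ≤ λ` almost surely and `λ ≤ ∫ ℓ`, the two agree almost surely, so the limit exists and
equals `λ`.
-/

open MeasureTheory Filter Topology

/-! ### The lower bound for subadditive cocycles -/

/-- Greedy decomposition: outside the bad set `B`, some block of length at most `K` has average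
cost at most `c`; on `B`, a single step is paid for by `f 1`. The last sum pays for the at most `K`
steps that remain once no full block is guaranteed to fit. -/
theorem subadditive_greedy_bound {Ω : Type*} (T : Ω → Ω) (f : ℕ → Ω → ENNReal)
    (h0 : ∀ ω, f 0 ω = 0)
    (hsub : ∀ m n ω, f (m + n) ω ≤ f m ω + f n (T^[m] ω))
    (c : Ω → ENNReal) (hc : ∀ ω, c (T ω) ≤ c ω) (K : ℕ) (B : Set Ω)
    (hB : ∀ ω, ω ∉ B → ∃ N, 1 ≤ N ∧ N ≤ K ∧ f N ω ≤ N * c ω) (n : ℕ) (ω : Ω) :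
    f n ω ≤ n * c ω + ∑ i ∈ Finset.range n, B.indicator (f 1) (T^[i] ω)
      + ∑ i ∈ Finset.Ico (n - K) n, f 1 (T^[i] ω) := by
  have hsum : ∀ n ω, f n ω ≤ ∑ i ∈ Finset.range n, f 1 (T^[i] ω) := by
    intro n
    induction n with
    | zero => intro ω; simp [h0]
    | succ n ih =>
      intro ω
      rw [Finset.sum_range_succ]
      exact (hsub n 1 ω).trans (by gcongr; exact ih ω)
  have hcN : ∀ N ω, c (T^[N] ω) ≤ c ω := by
    intro N
    induction N with
    | zero => intro ω; simp
    | succ N ih => intro ω; exact (ih (T ω)).trans (hc ω)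
  have hstep : ∀ N n ω, N ≤ n →
      ∑ i ∈ Finset.Ico (n - N - K) (n - N), f 1 (T^[i] (T^[N] ω))
        ≤ ∑ i ∈ Finset.Ico (n - K) n, f 1 (T^[i] ω) := by
    intro N n ω hN
    have : ∑ i ∈ Finset.Ico (n - N - K) (n - N), f 1 (T^[i] (T^[N] ω))
        = ∑ i ∈ Finset.Ico (n - N - K + N) (n - N + N), f 1 (T^[i] ω) := by
      rw [← Finset.sum_Ico_add']
      simp only [Function.iterate_add_apply]
    rw [this]
    apply Finset.sum_le_sum_of_subset
    intro i
    simp only [Finset.mem_Ico]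
    omega
  have hind : ∀ N n ω, N ≤ n →
      ∑ i ∈ Finset.range N, B.indicator (f 1) (T^[i] ω)
        + ∑ i ∈ Finset.range (n - N), B.indicator (f 1) (T^[i] (T^[N] ω))
        = ∑ i ∈ Finset.range n, B.indicator (f 1) (T^[i] ω) := by
    intro N n ω hN
    obtain ⟨k, rfl⟩ := Nat.exists_eq_add_of_le hN
    rw [Finset.sum_range_add, Nat.add_sub_cancel_left]
    simp only [← Function.iterate_add_apply, add_comm]
  induction n using Nat.strong_induction_on generalizing ω with
  | _ n ih =>
  by_cases hnK : n ≤ K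
  · refine (hsum n ω).trans ?_
    rw [Nat.sub_eq_zero_of_le hnK, ← Finset.range_eq_Ico]
    exact le_add_self
  push Not at hnK
  -- One greedy step: a block of length `N` when one is available, otherwise a single bad step.
  obtain ⟨N, hN1, hNn, hN⟩ : ∃ N, 1 ≤ N ∧ N ≤ n ∧
      f N ω ≤ N * c ω + ∑ i ∈ Finset.range N, B.indicator (f 1) (T^[i] ω) := by
    by_cases hω : ω ∈ B
    · refine ⟨1, le_rfl, by omega, ?_⟩
      simp [Set.indicator_of_mem hω]
    · obtain ⟨N, hN1, hNK, hN⟩ := hB ω hω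
      exact ⟨N, hN1, by omega, hN.trans le_self_add⟩
  have h1 : f n ω ≤ f N ω + f (n - N) (T^[N] ω) := by
    have := hsub N (n - N) ω
    rwa [Nat.add_sub_cancel' hNn] at this
  have h2 := ih (n - N) (by omega) (T^[N] ω)
  have hcast : (n : ENNReal) = (N : ENNReal) + ((n - N : ℕ) : ENNReal) := by
    rw [← Nat.cast_add, Nat.add_sub_cancel' hNn]
  rw [← hind N n ω hNn, hcast]
  refine (h1.trans (add_le_add hN (h2.trans (add_le_add (add_le_add
    (mul_le_mul_right (hcN N ω) _) le_rfl) (hstep N n ω hNn))))).trans (le_of_eq ?_)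
  ring

/-- Changing the first increment alters `f n` by a bounded amount only, so the lower growth rate
does not increase along `T`. -/
theorem liminf_shift_le {Ω : Type*} (T : Ω → Ω) (f : ℕ → Ω → ENNReal)
    (hrev : ∀ n ω, f n (T ω) ≤ f 1 ω + f (n + 1) ω) (hfin : ∀ ω, f 1 ω ≠ ⊤) (ω : Ω) :
    liminf (fun n : ℕ => f n (T ω) / n) atTop ≤ liminf (fun n : ℕ => f n ω / n) atTop := by
  refine le_of_forall_gt fun b hb => ?_
  obtain ⟨b', hb', hbb⟩ := exists_between hb
  refine lt_of_le_of_lt ?_ hbb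
  obtain ⟨b'', hb'', hbb''⟩ := exists_between hb'
  rw [← liminf_nat_add _ 1] at hb''
  have hfr := frequently_lt_of_liminf_lt (by isBoundedDefault) hb''
  have hb't : b'' ≠ ⊤ := (hbb''.trans_le le_top).ne
  have hlim : Tendsto (fun n : ℕ => (f 1 ω + b'') / n + b'') atTop (𝓝 (0 + b'')) := by
    refine Tendsto.add ?_ tendsto_const_nhds
    refine (ENNReal.Tendsto.const_div ENNReal.tendsto_nat_nhds_top (Or.inr ?_)).trans (by simp)
    exact ENNReal.add_ne_top.2 ⟨hfin ω, hb't⟩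
  rw [zero_add] at hlim
  apply liminf_le_of_frequently_le'
  refine (hfr.and_eventually ((hlim.eventually_lt_const hbb'').and
    (eventually_ge_atTop 1))).mono ?_
  rintro n ⟨hn, hn', hn1⟩
  refine le_trans ?_ hn'.le
  have hn0 : (n : ENNReal) ≠ 0 := by simp; omega
  rw [ENNReal.div_lt_iff (by simp) (by simp)] at hn
  rw [ENNReal.div_le_iff hn0 (by simp), add_mul, ENNReal.div_mul_cancel hn0 (by simp)]
  refine (hrev n ω).trans ((add_le_add le_rfl hn.le).trans (le_of_eq ?_))
  push_cast
  ring

/-- Lower half of the subadditive ergodic theorem: integrate the greedy bound with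
`c = liminf (f n / n) + ε`, divide by `n`, and let `n → ∞`, then `K → ∞`. -/
theorem le_lintegral_liminf {Ω : Type*} [MeasurableSpace Ω] (P : Measure Ω)
    [IsProbabilityMeasure P] (T : Ω → Ω) (hT : MeasurePreserving T P P) (f : ℕ → Ω → ENNReal)
    (hf : ∀ n, Measurable (f n)) (h0 : ∀ ω, f 0 ω = 0)
    (hsub : ∀ m n ω, f (m + n) ω ≤ f m ω + f n (T^[m] ω))
    (hrev : ∀ n ω, f n (T ω) ≤ f 1 ω + f (n + 1) ω)
    (hfin : ∀ ω, f 1 ω ≠ ⊤) (hint : ∫⁻ ω, f 1 ω ∂P ≠ ⊤) (L : ENNReal)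
    (hL : ∀ n : ℕ, 1 ≤ n → L ≤ (∫⁻ ω, f n ω ∂P) / n) :
    L ≤ ∫⁻ ω, liminf (fun n : ℕ => f n ω / n) atTop ∂P := by
  set l : Ω → ENNReal := fun ω => liminf (fun n : ℕ => f n ω / n) atTop with hl
  have hlm : Measurable l := Measurable.liminf fun n => (hf n).div_const _
  refine ENNReal.le_of_forall_pos_le_add fun ε hε _ => ?_
  let B : ℕ → Set Ω := fun K => {ω | ∀ N, 1 ≤ N → N ≤ K → (N : ENNReal) * (l ω + ε) < f N ω}
  have hBm : ∀ K, MeasurableSet (B K) := by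
    intro K
    have : B K = ⋂ N : ℕ, ⋂ (_ : 1 ≤ N), ⋂ (_ : N ≤ K), {ω | (N : ENNReal) * (l ω + ε) < f N ω} := by
      ext ω; simp [B]
    rw [this]
    refine MeasurableSet.iInter fun N => MeasurableSet.iInter fun _ => MeasurableSet.iInter fun _ => ?_
    exact measurableSet_lt ((hlm.add_const _).const_mul _) (hf N)
  have hBanti : Antitone B := fun K K' h ω hω N h1 h2 => hω N h1 (h2.trans h)
  have hBempty : ⋂ K, B K = ∅ := by
    rw [Set.eq_empty_iff_forall_notMem]
    intro ω hω
    rw [Set.mem_iInter] at hω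
    have hlt : l ω < l ω + ε := by
      refine ENNReal.lt_add_right ?_ (by simpa using hε.ne')
      intro htop
      have := hω 1 1 le_rfl le_rfl
      simp [htop] at this
    have hfr := frequently_lt_of_liminf_lt (by isBoundedDefault) hlt
    obtain ⟨N, hN, hN1⟩ := (hfr.and_eventually (eventually_ge_atTop 1)).exists
    have := hω N N hN1 le_rfl
    rw [ENNReal.div_lt_iff (by simp; omega) (by simp)] at hN
    rw [mul_comm] at this
    exact lt_asymm hN this
  have hlim : Tendsto (fun K => ∫⁻ ω in B K, f 1 ω ∂P) atTop (𝓝 0) := by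
    apply tendsto_setLIntegral_zero hint
    have := tendsto_measure_iInter_atTop (μ := P) (s := B)
      (fun K => (hBm K).nullMeasurableSet) hBanti ⟨0, measure_ne_top _ _⟩
    simpa [hBempty, Function.comp_def] using this
  have hTi : ∀ i, MeasurePreserving (T^[i]) P P := fun i => hT.iterate i
  have key : ∀ K, L ≤ (∫⁻ ω, l ω ∂P) + ε + ∫⁻ ω in B K, f 1 ω ∂P := by
    intro K
    set δ := ∫⁻ ω in B K, f 1 ω ∂P with hδ
    set E := ∫⁻ ω, f 1 ω ∂P with hE
    have hn : ∀ n : ℕ, 1 ≤ n → L ≤ (∫⁻ ω, l ω ∂P) + ε + δ + (K * E) / n := by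
      intro n hn1
      have hn0 : (n : ENNReal) ≠ 0 := by simp; omega
      have hI : ∫⁻ ω, f n ω ∂P ≤ n * ((∫⁻ ω, l ω ∂P) + ε) + n * δ + K * E := by
        calc ∫⁻ ω, f n ω ∂P
            ≤ ∫⁻ ω, (n * (l ω + ε) + ∑ i ∈ Finset.range n, (B K).indicator (f 1) (T^[i] ω)
                + ∑ i ∈ Finset.Ico (n - K) n, f 1 (T^[i] ω)) ∂P := by
              refine lintegral_mono fun ω => ?_
              refine subadditive_greedy_bound T f h0 hsub (fun ω => l ω + ε) ?_ K (B K) ?_ n ω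
              · intro ω
                exact add_le_add (liminf_shift_le T f hrev hfin ω) le_rfl
              · intro ω hω
                simpa [B, and_assoc] using hω
          _ = n * ((∫⁻ ω, l ω ∂P) + ε) + n * δ + ((n - (n - K) : ℕ) : ENNReal) * E := by
              have hm1 : ∀ i, Measurable fun ω => f 1 (T^[i] ω) :=
                fun i => (hf 1).comp (hTi i).measurable
              have hm2 : ∀ i, Measurable fun ω => (B K).indicator (f 1) (T^[i] ω) :=
                fun i => ((hf 1).indicator (hBm K)).comp (hTi i).measurable
              rw [lintegral_add_right _ (Finset.measurable_fun_sum _ fun i _ => hm1 i),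
                lintegral_add_right _ (Finset.measurable_fun_sum _ fun i _ => hm2 i),
                lintegral_const_mul _ (hlm.add_const _), lintegral_add_right _ measurable_const,
                lintegral_finsetSum _ fun i _ => hm1 i, lintegral_finsetSum _ fun i _ => hm2 i]
              simp only [fun i => (hTi i).lintegral_comp (hf 1),
                fun i => (hTi i).lintegral_comp ((hf 1).indicator (hBm K)),
                lintegral_indicator (hBm K)]
              simp [hδ, hE]
          _ ≤ _ := by
              gcongr
              omega
      refine (hL n hn1).trans ?_
      rw [ENNReal.div_le_iff hn0 (by simp)]
      refine hI.trans (le_of_eq ?_)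
      rw [add_mul, ENNReal.div_mul_cancel hn0 (by simp)]
      ring
    have hz : Tendsto (fun n : ℕ => (∫⁻ ω, l ω ∂P) + ε + δ + (K * E) / n) atTop
        (𝓝 ((∫⁻ ω, l ω ∂P) + ε + δ + 0)) := by
      refine Tendsto.add tendsto_const_nhds ?_
      refine ENNReal.Tendsto.const_div ENNReal.tendsto_nat_nhds_top (Or.inr ?_) |>.trans (by simp)
      exact ENNReal.mul_ne_top (by simp) hint
    rw [add_zero] at hz
    exact ge_of_tendsto hz ((eventually_ge_atTop 1).mono hn)
  have hz := (tendsto_const_nhds (x := (∫⁻ ω, l ω ∂P) + ε)).add hlim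
  rw [add_zero] at hz
  exact ge_of_tendsto' hz key

/-! ### The shift on increments -/

/-- The one-sided shift on the space of increments. -/
def incShift {Γ : Type*} (ω : ℕ → Γ) : ℕ → Γ := fun i => ω (i + 1)

theorem incShift_iterate {Γ : Type*} (m : ℕ) (ω : ℕ → Γ) : incShift^[m] ω = fun i => ω (i + m) := by
  induction m generalizing ω with
  | zero => rfl
  | succ m ih =>
    rw [Function.iterate_succ_apply, ih]
    funext i
    simp [incShift, add_assoc]

theorem measurePreserving_incShift {Γ : Type*} [MeasurableSpace Γ] {μ : Measure Γ} [IsProbabilityMeasure μ] :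
    MeasurePreserving (incShift : (ℕ → Γ) → ℕ → Γ)
      (Measure.infinitePi fun _ => μ) (Measure.infinitePi fun _ => μ) :=
  ⟨measurable_pi_lambda _ fun i => measurable_pi_apply (i + 1),
    Measure.map_infinitePi_infinitePi_of_inj (P := fun _ : ℕ => μ) (add_left_injective 1)⟩

/-! ### Displacement of the walk and the upper bound -/

section Walk

variable {Γ : Type*} [Group Γ] {X : Type*} [MetricSpace X] [MulAction Γ X]

/-- The displacement `|Zₙ(ω)| = d(Zₙ(ω) o, o)` of the random walk with increments `ω`. -/
noncomputable def walkLen (o : X) (n : ℕ) (ω : ℕ → Γ) : ℝ :=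
  dist ((((List.range n).map ω).prod) • o) o

theorem prod_range_add (m n : ℕ) (ω : ℕ → Γ) :
    ((List.range (m + n)).map ω).prod
      = ((List.range m).map ω).prod * ((List.range n).map (incShift^[m] ω)).prod := by
  rw [List.range_add, List.map_append, List.prod_append, List.map_map, incShift_iterate]
  congr 3
  funext i
  simp [add_comm]

theorem walkLen_add (hiso : ∀ (g : Γ) (y z : X), dist (g • y) (g • z) = dist y z) (o : X)
    (m n : ℕ) (ω : ℕ → Γ) :
    walkLen o (m + n) ω ≤ walkLen o m ω + walkLen o n (incShift^[m] ω) := by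
  unfold walkLen
  rw [prod_range_add, mul_smul, add_comm]
  refine (dist_triangle _ (((List.range m).map ω).prod • o) _).trans ?_
  rw [hiso]

/-- The reverse triangle inequality `|g⁻¹ h| ≤ |g| + |h|`, with `g` the first increment. -/
theorem walkLen_shift_le (hiso : ∀ (g : Γ) (y z : X), dist (g • y) (g • z) = dist y z) (o : X)
    (n : ℕ) (ω : ℕ → Γ) :
    walkLen o n (incShift ω) ≤ walkLen o 1 ω + walkLen o (n + 1) ω := by
  unfold walkLen
  rw [add_comm n 1, prod_range_add, mul_smul, Function.iterate_one]
  rw [← hiso ((List.range 1).map ω).prod _ o, add_comm, dist_comm (((List.range 1).map ω).prod • o) o]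
  exact dist_triangle _ _ _

theorem walkLen_mul_le (hiso : ∀ (g : Γ) (y z : X), dist (g • y) (g • z) = dist y z) (o : X)
    (m q : ℕ) (ω : ℕ → Γ) :
    walkLen o (m * q) ω ≤ ∑ j ∈ Finset.range q, walkLen o m (incShift^[m * j] ω) := by
  induction q with
  | zero => simp [walkLen]
  | succ q ih =>
    rw [Finset.sum_range_succ, Nat.mul_succ]
    exact (walkLen_add hiso o _ _ ω).trans (by gcongr)

/-- Cutting `[0, n)` into blocks of length `m`; the incomplete last block is bounded by the
sum of the lengths of its increments. -/
theorem walkLen_le_blocks (hiso : ∀ (g : Γ) (y z : X), dist (g • y) (g • z) = dist y z) (o : X)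
    (m n : ℕ) (ω : ℕ → Γ) :
    walkLen o n ω ≤ ∑ j ∈ Finset.range (n / m), walkLen o m (incShift^[m * j] ω)
      + (∑ i ∈ Finset.range n, walkLen o 1 (incShift^[1 * i] ω)
        - ∑ i ∈ Finset.range (m * (n / m)), walkLen o 1 (incShift^[1 * i] ω)) := by
  have h1 := walkLen_add hiso o (m * (n / m)) (n % m) ω
  rw [Nat.div_add_mod] at h1
  have h2 := walkLen_mul_le hiso o m (n / m) ω
  have h3 := walkLen_mul_le hiso o 1 (n % m) (incShift^[m * (n / m)] ω)
  rw [one_mul] at h3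
  have h4 : ∑ i ∈ Finset.range n, walkLen o 1 (incShift^[1 * i] ω)
      = ∑ i ∈ Finset.range (m * (n / m)), walkLen o 1 (incShift^[1 * i] ω)
        + ∑ j ∈ Finset.range (n % m), walkLen o 1 (incShift^[1 * j] (incShift^[m * (n / m)] ω)) := by
    conv_lhs => rw [← Nat.div_add_mod n m]
    rw [Finset.sum_range_add]
    simp only [one_mul, ← Function.iterate_add_apply, add_comm]
  linarith

variable [Countable Γ] [MeasurableSpace Γ] [MeasurableSingletonClass Γ]

theorem measurable_walkLen (o : X) (n : ℕ) : Measurable (walkLen o n : (ℕ → Γ) → ℝ) := by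
  have h : Measurable fun ω : ℕ → Γ => ((List.range n).map ω).prod := by
    induction n with
    | zero => simp
    | succ n ih =>
      simp only [List.range_succ, List.map_append, List.prod_append, List.map_cons, List.map_nil,
        List.prod_singleton]
      exact (Measurable.of_discrete (f := fun p : Γ × Γ => p.1 * p.2)).comp
        (ih.prodMk (measurable_pi_apply n))
  exact (Measurable.of_discrete (f := fun g : Γ => dist (g • o) o)).comp h

/-- Displacements over disjoint blocks of increments are independent. -/
theorem indepFun_blocks {μ : Measure Γ} [IsProbabilityMeasure μ] (o : X) (m : ℕ) {j k : ℕ}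
    (hjk : j ≠ k) :
    ProbabilityTheory.IndepFun (fun ω : ℕ → Γ => walkLen o m (incShift^[m * j] ω))
      (fun ω => walkLen o m (incShift^[m * k] ω)) (Measure.infinitePi fun _ => μ) := by
  have hind : ProbabilityTheory.iIndepFun (fun i (ω : ℕ → Γ) => ω i)
      (Measure.infinitePi fun _ => μ) :=
    ProbabilityTheory.iIndepFun_infinitePi (P := fun _ : ℕ => μ) (X := fun _ g => g)
      (fun _ => measurable_id)
  let S : ℕ → Finset ℕ := fun j => Finset.Ico (m * j) (m * j + m)
  have hlt : ∀ a b, a < b → Disjoint (S a) (S b) := by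
    intro a b hab
    have : m * (a + 1) ≤ m * b := Nat.mul_le_mul_left m hab
    rw [Finset.disjoint_left]
    intro i
    simp only [S, Finset.mem_Ico]
    rw [mul_add] at this
    omega
  have hdisj : Disjoint (S j) (S k) := by
    rcases lt_or_gt_of_ne hjk with h | h
    · exact hlt _ _ h
    · exact (hlt _ _ h).symm
  have hI := hind.indepFun_finset (S j) (S k) hdisj (fun i => measurable_pi_apply i)
  -- the `j`-th block as a function of its own coordinates; the value `1` elsewhere is irrelevant
  let φ : (j : ℕ) → (S j → Γ) → ℝ := fun j x =>
    walkLen o m fun i => if h : i + m * j ∈ S j then x ⟨i + m * j, h⟩ else 1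
  have hφm : ∀ j, Measurable (φ j) := by
    intro j
    refine (measurable_walkLen o m).comp (measurable_pi_lambda _ fun i => ?_)
    by_cases h : i + m * j ∈ S j
    · simp only [h, dite_true]; exact measurable_pi_apply _
    · simp only [h, dite_false]; exact measurable_const
  have hφ : ∀ j, (fun ω : ℕ → Γ => walkLen o m (incShift^[m * j] ω))
      = φ j ∘ fun ω (i : S j) => ω i := by
    intro j
    funext ω
    simp only [φ, Function.comp_apply, walkLen, incShift_iterate]
    congr 3
    refine List.map_congr_left fun i hi => ?_
    have : i + m * j ∈ S j := by
      simp only [S, Finset.mem_Ico, List.mem_range] at hi ⊢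
      omega
    simp [this]
  rw [hφ j, hφ k]
  exact hI.comp (hφm j) (hφm k)

theorem ae_tendsto_blocks {μ : Measure Γ} [IsProbabilityMeasure μ] (o : X) (m : ℕ)
    (hint : Integrable (walkLen o m : (ℕ → Γ) → ℝ) (Measure.infinitePi fun _ => μ)) :
    ∀ᵐ ω ∂(Measure.infinitePi fun _ : ℕ => μ),
      Tendsto (fun q : ℕ => (∑ j ∈ Finset.range q, walkLen o m (incShift^[m * j] ω)) / q)
        atTop (𝓝 (∫ ω, walkLen o m ω ∂(Measure.infinitePi fun _ : ℕ => μ))) := by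
  have h := ProbabilityTheory.strong_law_ae_real
    (μ := Measure.infinitePi fun _ : ℕ => μ)
    (fun j ω => walkLen o m (incShift^[m * j] ω)) (by simpa using hint)
    (fun j k hjk => indepFun_blocks o m hjk) (fun j => by
      have hmp := (measurePreserving_incShift (μ := μ)).iterate (m * j)
      have hm := measurable_walkLen (Γ := Γ) o m
      simp only [mul_zero, Function.iterate_zero, id]
      refine ⟨(hm.comp hmp.measurable).aemeasurable, hm.aemeasurable, ?_⟩
      conv_rhs => rw [← hmp.map_eq]
      rw [Measure.map_map hm hmp.measurable]
      rfl)
  simpa using h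

/-- Almost surely `limsup |Zₙ| / n ≤ E|Zₘ| / m`: the strong law of large numbers handles the full
blocks of length `m`, and the incomplete last block is a difference of two partial sums of
increment lengths with the same asymptotics. -/
theorem ae_eventually_walkLen_lt {μ : Measure Γ} [IsProbabilityMeasure μ]
    (hiso : ∀ (g : Γ) (y z : X), dist (g • y) (g • z) = dist y z) (o : X) (m : ℕ) (hm : 1 ≤ m)
    (hint : ∀ n, Integrable (walkLen o n : (ℕ → Γ) → ℝ) (Measure.infinitePi fun _ => μ)) :
    ∀ᵐ ω ∂(Measure.infinitePi fun _ : ℕ => μ), ∀ b : ℝ,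
      (∫ ω, walkLen o m ω ∂(Measure.infinitePi fun _ : ℕ => μ)) / m < b →
      ∀ᶠ n : ℕ in atTop, walkLen o n ω / n < b := by
  filter_upwards [ae_tendsto_blocks o m (hint m), ae_tendsto_blocks o 1 (hint 1)] with ω h1 h2 b hb
  set E := ∫ ω, walkLen o m ω ∂(Measure.infinitePi fun _ : ℕ => μ)
  set E₁ := ∫ ω, walkLen o 1 ω ∂(Measure.infinitePi fun _ : ℕ => μ)
  have hm0 : (0 : ℝ) < m := by exact_mod_cast hm
  have hq : Tendsto (fun n : ℕ => n / m) atTop atTop :=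
    Nat.tendsto_div_const_atTop (by omega)
  have hmq : Tendsto (fun n : ℕ => m * (n / m)) atTop atTop :=
    hq.const_mul_atTop' (by omega)
  have hr : Tendsto (fun n : ℕ => ((n / m : ℕ) : ℝ) / n) atTop (𝓝 (1 / m)) := by
    have := (tendsto_nat_floor_mul_div_atTop (R := ℝ) (a := 1 / m) (by positivity)).comp
      tendsto_natCast_atTop_atTop
    refine this.congr fun n => ?_
    simp only [Function.comp]
    rw [one_div_mul_eq_div, Nat.floor_div_eq_div]
  have hlim := ((h1.comp hq).mul hr).add (h2.sub ((h2.comp hmq).mul (hr.const_mul (m : ℝ))))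
  have hval : E * (1 / m) + (E₁ - E₁ * (m * (1 / m))) = E / m := by
    field_simp
    ring
  rw [hval] at hlim
  filter_upwards [hlim.eventually_lt_const hb, eventually_ge_atTop m] with n hn hnm
  refine lt_of_le_of_lt ?_ hn
  have hn0 : (0 : ℝ) < n := by exact_mod_cast (by omega : 0 < n)
  have hq0 : (0 : ℝ) < (n / m : ℕ) := by exact_mod_cast Nat.div_pos hnm (by omega)
  refine (div_le_div_of_nonneg_right (walkLen_le_blocks hiso o m n ω) hn0.le).trans (le_of_eq ?_)
  simp only [Function.comp]
  push_cast
  field_simp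

end Walk

/-! ### Existence of the drift -/

/-- for a random walk with finite first moment on a group acting by isometries
on a metric space, the drift `λ = inf_n (1/n) E[d(Zₙ o, o)]` is finite and almost surely
`d(Zₙ(ω) o, o)/n → λ`. -/
theorem drift_exists
    {Γ : Type*} [Group Γ] [Countable Γ] [MeasurableSpace Γ] [MeasurableSingletonClass Γ]
    {X : Type*} [MetricSpace X] [MulAction Γ X]
    (hiso : ∀ (g : Γ) (y z : X), dist (g • y) (g • z) = dist y z)
    (o : X) (μ : Measure Γ) [IsProbabilityMeasure μ]
    (hmom : ∑' g : Γ, μ {g} * ENNReal.ofReal (dist (g • o) o) ≠ ⊤)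
    (ℙ : Measure (ℕ → Γ)) [IsProbabilityMeasure ℙ]
    (hℙ : ∀ (s : Finset ℕ) (B : ℕ → Set Γ),
      ℙ {ω | ∀ i ∈ s, ω i ∈ B i} = ∏ i ∈ s, μ (B i)) :
    ∃ lam : ENNReal,
      lam = ⨅ n : {n : ℕ // 1 ≤ n},
        (∫⁻ ω, ENNReal.ofReal (dist ((((List.range (n : ℕ)).map ω).prod) • o) o) ∂ℙ)
          / (n : ℕ) ∧
      lam ≠ ⊤ ∧
      ∀ᵐ ω ∂ℙ, Tendsto
        (fun n : ℕ => dist ((((List.range n).map ω).prod) • o) o / n)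
        atTop (𝓝 lam.toReal) := by
  obtain rfl : ℙ = Measure.infinitePi fun _ => μ :=
    Measure.eq_infinitePi _ fun s t _ => hℙ s t
  set P : Measure (ℕ → Γ) := Measure.infinitePi fun _ => μ
  let f : ℕ → (ℕ → Γ) → ENNReal := fun n ω => ENNReal.ofReal (walkLen o n ω)
  have hnn : ∀ n (ω : ℕ → Γ), 0 ≤ walkLen o n ω := fun n ω => dist_nonneg
  have hf : ∀ n, Measurable (f n) := fun n => (measurable_walkLen o n).ennreal_ofReal
  have hT : MeasurePreserving incShift P P := measurePreserving_incShift
  have h0 : ∀ ω, f 0 ω = 0 := fun ω => by simp [f, walkLen]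
  have hsub : ∀ m n ω, f (m + n) ω ≤ f m ω + f n (incShift^[m] ω) := by
    intro m n ω
    rw [← ENNReal.ofReal_add (hnn _ _) (hnn _ _)]
    exact ENNReal.ofReal_le_ofReal (walkLen_add hiso o m n ω)
  have hrev : ∀ n ω, f n (incShift ω) ≤ f 1 ω + f (n + 1) ω := by
    intro n ω
    rw [← ENNReal.ofReal_add (hnn _ _) (hnn _ _)]
    exact ENNReal.ofReal_le_ofReal (walkLen_shift_le hiso o n ω)
  have hint1 : ∫⁻ ω, f 1 ω ∂P ≠ ⊤ := by
    have h : ∫⁻ ω, f 1 ω ∂P = ∫⁻ g, ENNReal.ofReal (dist (g • o) o) ∂μ := by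
      rw [← Measure.infinitePi_map_eval (fun _ : ℕ => μ) 0,
        lintegral_map Measurable.of_discrete (measurable_pi_apply 0)]
      simp [f, walkLen, P]
    rw [h, lintegral_countable']
    simpa only [mul_comm] using hmom
  have hintn : ∀ n, ∫⁻ ω, f n ω ∂P ≠ ⊤ := by
    intro n
    induction n with
    | zero => simp [h0]
    | succ n ih =>
      refine ne_top_of_le_ne_top (ENNReal.add_ne_top.2 ⟨ih, hint1⟩)
        ((lintegral_mono fun ω => hsub n 1 ω).trans (le_of_eq ?_))
      rw [lintegral_add_left (hf n), (hT.iterate n).lintegral_comp (hf 1)]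
  have hint : ∀ n, Integrable (walkLen o n : (ℕ → Γ) → ℝ) P := by
    intro n
    refine ⟨(measurable_walkLen o n).aestronglyMeasurable, ?_⟩
    rw [hasFiniteIntegral_iff_ofReal (ae_of_all _ (hnn n))]
    exact (hintn n).lt_top
  have hE : ∀ n, ∫ ω, walkLen o n ω ∂P = (∫⁻ ω, f n ω ∂P).toReal := fun n =>
    integral_eq_lintegral_of_nonneg_ae (ae_of_all _ (hnn n))
      (measurable_walkLen o n).aestronglyMeasurable
  set lam : ENNReal := ⨅ n : {n : ℕ // 1 ≤ n}, (∫⁻ ω, f n ω ∂P) / (n : ℕ) with hlam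
  have hle : ∀ n : ℕ, 1 ≤ n → lam ≤ (∫⁻ ω, f n ω ∂P) / n := fun n hn =>
    iInf_le (fun n : {n : ℕ // 1 ≤ n} => (∫⁻ ω, f n ω ∂P) / (n : ℕ)) ⟨n, hn⟩
  have htop : lam ≠ ⊤ := ne_top_of_le_ne_top hint1 (by simpa using hle 1 le_rfl)
  refine ⟨lam, rfl, htop, ?_⟩
  have hup : ∀ᵐ ω ∂P, ∀ b : ℝ, lam.toReal < b → ∀ᶠ n : ℕ in atTop, walkLen o n ω / n < b := by
    have h : ∀ᵐ ω ∂P, ∀ m : ℕ, 1 ≤ m → ∀ b : ℝ, (∫ ω, walkLen o m ω ∂P) / m < b →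
        ∀ᶠ n : ℕ in atTop, walkLen o n ω / n < b := by
      rw [ae_all_iff]
      intro m
      by_cases hm : 1 ≤ m
      · filter_upwards [ae_eventually_walkLen_lt hiso o m hm hint] with ω hω _ using hω
      · exact ae_of_all _ fun ω h => absurd h hm
    filter_upwards [h] with ω hω b hb
    have hb' : lam < ENNReal.ofReal b := (ENNReal.lt_ofReal_iff_toReal_lt htop).2 hb
    rw [hlam, iInf_lt_iff] at hb'
    obtain ⟨⟨m, hm⟩, hmb⟩ := hb'
    refine hω m hm b ?_
    rw [hE]
    have hne : (∫⁻ ω, f m ω ∂P) / (m : ℕ) ≠ ⊤ := hmb.ne_top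
    have := (ENNReal.lt_ofReal_iff_toReal_lt hne).1 hmb
    simpa [ENNReal.toReal_div] using this
  let l : (ℕ → Γ) → ENNReal := fun ω => liminf (fun n : ℕ => f n ω / n) atTop
  have hfr : ∀ (n : ℕ) ω, 1 ≤ n → f n ω / n = ENNReal.ofReal (walkLen o n ω / n) := by
    intro n ω hn
    rw [ENNReal.ofReal_div_of_pos (by exact_mod_cast hn), ENNReal.ofReal_natCast]
  have hl_le : l ≤ᵐ[P] fun _ => lam := by
    filter_upwards [hup] with ω hω
    refine le_of_forall_gt_imp_ge_of_dense fun b hb => ?_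
    by_cases hbt : b = ⊤
    · simp [hbt]
    have hb' : lam.toReal < b.toReal := (ENNReal.toReal_lt_toReal htop hbt).2 hb
    apply liminf_le_of_frequently_le'
    refine ((hω _ hb').and (eventually_ge_atTop 1)).frequently.mono ?_
    rintro n ⟨hn, hn1⟩
    rw [hfr n ω hn1]
    exact ENNReal.ofReal_le_of_le_toReal hn.le
  have hlow : lam ≤ ∫⁻ ω, l ω ∂P :=
    le_lintegral_liminf P incShift hT f hf h0 hsub hrev (fun _ => ENNReal.ofReal_ne_top) hint1
      lam hle
  have hl_fin : ∫⁻ ω, l ω ∂P ≠ ⊤ :=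
    ne_top_of_le_ne_top htop ((lintegral_mono_ae hl_le).trans (by simp))
  have hl_eq := ae_eq_of_ae_le_of_lintegral_le hl_le hl_fin aemeasurable_const (by simpa using hlow)
  filter_upwards [hup, hl_eq] with ω hω hlω
  refine tendsto_order.2 ⟨fun a ha => ?_, fun b hb => hω b hb⟩
  by_cases ha0 : a < 0
  · exact Eventually.of_forall fun n => ha0.trans_le (by positivity)
  push Not at ha0
  have ha' : ENNReal.ofReal a < liminf (fun n : ℕ => f n ω / n) atTop := by
    change _ < l ω
    rw [hlω]
    exact (ENNReal.ofReal_lt_iff_lt_toReal ha0 htop).2 ha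
  filter_upwards [eventually_lt_of_lt_liminf ha', eventually_ge_atTop 1] with n hn hn1
  rw [hfr n ω hn1] at hn
  exact (ENNReal.ofReal_lt_ofReal_iff_of_nonneg ha0).1 hn
end

section
/- Let H be a set, c a natural number, and A_n, B_n, A, B subsets of H (n ∈ ℕ). Assume: (i) for every n, the symmetric difference A_n Δ B_n is finite with at most c elements; (ii) A_n converges to A pointwise, i.e. for every h ∈ H there is N such that for all n ≥ N, h ∈ A_n if and only if h ∈ A; (iii) B is a cluster point of (B_n) in the product topology, i.e. for every finite subset F ⊆ H and every N there exists n ≥ N such that for all h ∈ F, h ∈ B_n if and only if h ∈ B. Then the symmetric difference A Δ B is finite with at most c elements. -/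
/-!
Every finite subset `F` of `A₀ Δ B₀` is contained in a single `A n Δ B n`: on a finite set,
pointwise convergence is eventually equality, so some `n` makes `A n` agree with `A₀` and `B n`
agree with `B₀` on `F` simultaneously. Hence all finite subsets of `A₀ Δ B₀` have at most `c`
elements, which forces `A₀ Δ B₀` itself to be finite with at most `c` elements.
-/

/-- if `Aₙ Δ Bₙ` has at most `c` elements for every `n`, `Aₙ → A` pointwise and
`B` is a cluster point of `(Bₙ)` in the product topology, then `A Δ B` has at most `c`
elements. -/
theorem symmDiff_le_of_cluster
    {H : Type*} (c : ℕ) (A B : ℕ → Set H) (A₀ B₀ : Set H)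
    (hfin : ∀ n, (symmDiff (A n) (B n)).Finite ∧ (symmDiff (A n) (B n)).ncard ≤ c)
    (hA : ∀ h : H, ∃ N : ℕ, ∀ n ≥ N, (h ∈ A n ↔ h ∈ A₀))
    (hB : ∀ (F : Finset H) (N : ℕ), ∃ n ≥ N, ∀ h ∈ F, (h ∈ B n ↔ h ∈ B₀)) :
    (symmDiff A₀ B₀).Finite ∧ (symmDiff A₀ B₀).ncard ≤ c := by
  choose N hN using hA
  have key : ∀ F : Finset H, (F : Set H) ⊆ symmDiff A₀ B₀ → F.card ≤ c := by
    intro F hF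
    -- `F.sup N` bounds the stabilization times `N h` of all `h ∈ F`.
    obtain ⟨n, hn, hBn⟩ := hB F (F.sup N)
    have hsub : (F : Set H) ⊆ symmDiff (A n) (B n) := by
      intro h hh
      have hmem := hF hh
      have hAn := hN h n ((Finset.le_sup (f := N) hh).trans hn)
      rw [Set.mem_symmDiff] at hmem ⊢
      rwa [hAn, hBn h hh]
    calc F.card = (F : Set H).ncard := (Set.ncard_coe_finset F).symm
      _ ≤ (symmDiff (A n) (B n)).ncard := Set.ncard_le_ncard hsub (hfin n).1
      _ ≤ c := (hfin n).2
  have hfinite : (symmDiff A₀ B₀).Finite := by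
    by_contra hinf
    obtain ⟨F, hF, hcard⟩ := Set.Infinite.exists_subset_card_eq hinf (c + 1)
    have := key F hF
    omega
  refine ⟨hfinite, ?_⟩
  rw [Set.ncard_eq_toFinset_card _ hfinite]
  exact key _ (by simp)
end

section
/- Let V be a set and ℌ a halfspace system on V. Let (h_n)_{n∈ℕ} be a strictly descending chain in ℌ and let k ∈ ℌ satisfy k ∩ h_n ≠ ∅ for all n. Then one of the following holds: (a) there is an N such that k is transverse to h_n for all n ≥ N; or (b) there is an N such that h_n ⊆ k for all n ≥ N. Moreover, if the sequence (h_n) is pairwise strongly separated, then case (b) holds. -/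
/-!
If no `h n` is contained in `k`, then both `k` and `kᶜ` meet every `h n`. By interval-finiteness
no halfspace lies in every `h n` (the interval from it to `h 0` would contain the whole infinite
chain), so `k ⊆ h n` and `kᶜ ⊆ h n` both fail for large `n`. Hence all four corners are eventually
nonempty, i.e. `k` is eventually transverse to `h n`. Two consecutive such `h n` are then not
strongly separated, which excludes this case for a pairwise strongly separated chain.
-/

/-- Two subsets `h, k` of `V` are transverse if the four "corners" are all nonempty. -/
def Transverse {V : Type*} (h k : Set V) : Prop :=
  (h ∩ k).Nonempty ∧ (h ∩ kᶜ).Nonempty ∧ (hᶜ ∩ k).Nonempty ∧ (hᶜ ∩ kᶜ).Nonempty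

/-- A halfspace system on `V`: a family of subsets closed under complementation and
interval-finite. -/
structure HalfspaceSystem (V : Type*) where
  carrier : Set (Set V)
  compl_mem : ∀ h ∈ carrier, hᶜ ∈ carrier
  intervalFinite : ∀ h ∈ carrier, ∀ k ∈ carrier, h ⊆ k →
    {m ∈ carrier | h ⊆ m ∧ m ⊆ k}.Finite

/-- Two halfspaces are strongly separated if no member of the system is transverse to both. -/
def StronglySeparated {V : Type*} (ℌ : HalfspaceSystem V) (h k : Set V) : Prop :=
  ∀ m ∈ ℌ.carrier, ¬(Transverse m h ∧ Transverse m k)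

/-- By interval-finiteness a halfspace is contained in only finitely many terms of a strictly
descending chain. -/
lemma exists_not_subset_of_descending {V : Type*} (ℌ : HalfspaceSystem V)
    (h : ℕ → Set V) (hmem : ∀ n, h n ∈ ℌ.carrier) (hanti : StrictAnti h)
    (m : Set V) (hm : m ∈ ℌ.carrier) : ∃ N, ∀ n ≥ N, ¬ m ⊆ h n := by
  by_contra! hcon
  have hsub : ∀ n, m ⊆ h n := fun n => by
    obtain ⟨j, hj, hmj⟩ := hcon n
    exact hmj.trans (hanti.antitone hj)
  refine Set.infinite_range_of_injective hanti.injective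
    ((ℌ.intervalFinite m hm (h 0) (hmem 0) (hsub 0)).subset ?_)
  rintro _ ⟨n, rfl⟩
  exact ⟨hmem n, hsub n, hanti.antitone (Nat.zero_le n)⟩

/-- if `(hₙ)` is a strictly descending chain in a halfspace system and
`k ∩ hₙ ≠ ∅` for all `n`, then eventually either `k` is transverse to all `hₙ`, or `hₙ ⊆ k`
for all large `n`; and if the chain is pairwise strongly separated, the latter case holds. -/
theorem descending_chain_dichotomy
    {V : Type*} (ℌ : HalfspaceSystem V)
    (h : ℕ → Set V) (hmem : ∀ n, h n ∈ ℌ.carrier) (hdesc : ∀ n, h (n + 1) ⊂ h n)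
    (k : Set V) (hk : k ∈ ℌ.carrier) (hne : ∀ n, (k ∩ h n).Nonempty) :
    ((∃ N, ∀ n ≥ N, Transverse k (h n)) ∨ (∃ N, ∀ n ≥ N, h n ⊆ k)) ∧
    ((∀ i j, i ≠ j → StronglySeparated ℌ (h i) (h j)) → ∃ N, ∀ n ≥ N, h n ⊆ k) := by
  have hanti : StrictAnti h := strictAnti_nat_of_succ_lt hdesc
  have dich : (∃ N, ∀ n ≥ N, Transverse k (h n)) ∨ (∃ N, ∀ n ≥ N, h n ⊆ k) := by
    by_cases hb : ∃ N, h N ⊆ k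
    · obtain ⟨N, hN⟩ := hb
      exact Or.inr ⟨N, fun n hn => (hanti.antitone hn).trans hN⟩
    · push Not at hb
      obtain ⟨N₁, hN₁⟩ := exists_not_subset_of_descending ℌ h hmem hanti k hk
      obtain ⟨N₂, hN₂⟩ :=
        exists_not_subset_of_descending ℌ h hmem hanti kᶜ (ℌ.compl_mem k hk)
      refine Or.inl ⟨max N₁ N₂, fun n hn => ⟨hne n, ?_, ?_, ?_⟩⟩
      · exact Set.inter_compl_nonempty_iff.mpr (hN₁ n (le_of_max_le_left hn))
      · rw [Set.inter_comm]
        exact Set.inter_compl_nonempty_iff.mpr (hb n)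
      · exact Set.inter_compl_nonempty_iff.mpr (hN₂ n (le_of_max_le_right hn))
  refine ⟨dich, fun hsep => dich.resolve_left ?_⟩
  rintro ⟨N, hN⟩
  exact hsep N (N + 1) (by omega) k hk ⟨hN N le_rfl, hN (N + 1) (by omega)⟩
end

section
/- Let V be a set and ℌ a halfspace system on V. Let (s_m)_{m∈ℕ} be a strictly descending chain in ℌ that is pairwise strongly separated, and let (h_n)_{n∈ℕ} be a strictly descending chain in ℌ such that h_n ∩ s_m ≠ ∅ for all n and m. Then for every m there exists N such that h_n ⊆ s_m for all n ≥ N; in particular ⋂_{n∈ℕ} h_n ⊆ ⋂_{m∈ℕ} s_m. -/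
/-- An infinite strictly descending chain in a halfspace system has no lower bound in the system. -/
theorem HalfspaceSystem.exists_not_subset {V : Type*} (ℌ : HalfspaceSystem V)
    (c : ℕ → Set V) (hc : ∀ n, c n ∈ ℌ.carrier) (hdesc : ∀ n, c (n + 1) ⊂ c n)
    (a : Set V) (ha : a ∈ ℌ.carrier) : ∃ n, ¬ a ⊆ c n := by
  by_contra! hall
  have hanti : StrictAnti c := strictAnti_nat_of_succ_lt hdesc
  refine Set.infinite_of_injective_forall_mem hanti.injective (fun n => ?_)
    (ℌ.intervalFinite a ha (c 0) (hc 0) (hall 0))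
  exact ⟨hc n, hall n, hanti.antitone (Nat.zero_le n)⟩

/-- if `(sₘ)` is a strictly descending pairwise strongly separated chain and
`(hₙ)` is a strictly descending chain with `hₙ ∩ sₘ ≠ ∅` for all `n, m`, then for every `m`
the chain `(hₙ)` is eventually contained in `sₘ`; in particular `⋂ₙ hₙ ⊆ ⋂ₘ sₘ`. -/
theorem descending_chain_absorbed
    {V : Type*} (ℌ : HalfspaceSystem V)
    (s : ℕ → Set V) (hsmem : ∀ m, s m ∈ ℌ.carrier) (hsdesc : ∀ m, s (m + 1) ⊂ s m)
    (hss : ∀ i j, i ≠ j → StronglySeparated ℌ (s i) (s j))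
    (h : ℕ → Set V) (hhmem : ∀ n, h n ∈ ℌ.carrier) (hhdesc : ∀ n, h (n + 1) ⊂ h n)
    (hne : ∀ n m, (h n ∩ s m).Nonempty) :
    (∀ m, ∃ N, ∀ n ≥ N, h n ⊆ s m) ∧ (⋂ n, h n) ⊆ ⋂ m, s m := by
  have hs : Antitone s := (strictAnti_nat_of_succ_lt hsdesc).antitone
  have hh : Antitone h := (strictAnti_nat_of_succ_lt hhdesc).antitone
  have key : ∀ m, ∃ N, ∀ n ≥ N, h n ⊆ s m := by
    intro m
    suffices hN : ∃ N, h N ⊆ s m by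
      obtain ⟨N, hN⟩ := hN
      exact ⟨N, fun n hn => (hh hn).trans hN⟩
    by_contra! hnot
    obtain ⟨K, hK⟩ := ℌ.exists_not_subset s hsmem hsdesc (h 0)ᶜ (ℌ.compl_mem _ (hhmem 0))
    have dichotomy : ∀ n k, max K m ≤ k → Transverse (h n) (s k) ∨ s k ⊆ h n := by
      intro n k hk
      by_cases hsub : s k ⊆ h n
      · exact Or.inr hsub
      · left
        refine ⟨hne n k, ?_, ?_, ?_⟩
        · obtain ⟨x, hx, hxm⟩ := Set.not_subset.mp (hnot n)
          exact ⟨x, hx, fun hxk => hxm (hs (le_of_max_le_right hk) hxk)⟩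
        · obtain ⟨x, hx, hxn⟩ := Set.not_subset.mp hsub
          exact ⟨x, hxn, hx⟩
        · obtain ⟨x, hx, hxK⟩ := Set.not_subset.mp hK
          exact ⟨x, fun hxn => hx (hh (Nat.zero_le n) hxn),
            fun hxk => hxK (hs (le_of_max_le_left hk) hxk)⟩
    obtain ⟨n, hn⟩ := ℌ.exists_not_subset h hhmem hhdesc (s (max K m + 1)) (hsmem _)
    rcases dichotomy n (max K m) le_rfl with h₁ | h₁
    · rcases dichotomy n (max K m + 1) (Nat.le_succ _) with h₂ | h₂
      · exact hss _ _ (Nat.succ_ne_self _).symm (h n) (hhmem n) ⟨h₁, h₂⟩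
      · exact hn h₂
    · exact hn ((hs (Nat.le_succ _)).trans h₁)
  refine ⟨key, Set.subset_iInter fun m => ?_⟩
  obtain ⟨N, hN⟩ := key m
  exact (Set.iInter_subset h N).trans (hN N le_rfl)
end

section
/- Let V be a set and ℌ a halfspace system on V. Let 𝒟 ⊆ ℌ be a finite collection of pairwise transverse elements that is maximal, in the sense that no m ∈ ℌ is transverse to every element of 𝒟. Let (h_n)_{n∈ℕ} be a strictly descending chain in ℌ. Then there exist k ∈ 𝒟 and n ∈ ℕ such that h_n ⊆ k or h_n ⊆ V \ k. -/
theorem exists_not_subset_of_strictAnti {V : Type*} (ℌ : HalfspaceSystem V) {h : ℕ → Set V}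
    (hmem : ∀ n, h n ∈ ℌ.carrier) (hanti : StrictAnti h) {c : Set V} (hc : c ∈ ℌ.carrier) :
    ∃ n, ¬c ⊆ h n := by
  by_contra! hsub
  have hfin := ℌ.intervalFinite c hc (h 0) (hmem 0) (hsub 0)
  refine Set.infinite_of_injective_forall_mem hanti.injective (fun n => ?_) hfin
  exact ⟨hmem n, hsub n, hanti.antitone (Nat.zero_le n)⟩

/-- if `𝒟` is a finite maximal family of pairwise transverse halfspaces and
`(hₙ)` is a strictly descending chain in the system, then some term of the chain is
contained in a member of `𝒟` or in its complement. -/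
theorem chain_enters_maximal_transverse_family
    {V : Type*} (ℌ : HalfspaceSystem V)
    (𝒟 : Finset (Set V)) (h𝒟mem : ∀ k ∈ 𝒟, k ∈ ℌ.carrier)
    (h𝒟trans : ∀ k ∈ 𝒟, ∀ k' ∈ 𝒟, k ≠ k' → Transverse k k')
    (h𝒟max : ¬∃ m ∈ ℌ.carrier, ∀ k ∈ 𝒟, Transverse m k)
    (h : ℕ → Set V) (hmem : ∀ n, h n ∈ ℌ.carrier) (hdesc : ∀ n, h (n + 1) ⊂ h n) :
    ∃ k ∈ 𝒟, ∃ n : ℕ, h n ⊆ k ∨ h n ⊆ kᶜ := by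
  have hanti : StrictAnti h := strictAnti_nat_of_succ_lt hdesc
  have key : ∀ c : Set V, ∃ n, c ∈ ℌ.carrier → ¬c ⊆ h n := by
    intro c
    by_cases hc : c ∈ ℌ.carrier
    · obtain ⟨n, hn⟩ := exists_not_subset_of_strictAnti ℌ hmem hanti hc
      exact ⟨n, fun _ => hn⟩
    · exact ⟨0, fun hc' => absurd hc' hc⟩
  choose f hf using key
  by_contra! hcon
  let N := 𝒟.sup fun k => max (f k) (f kᶜ)
  refine h𝒟max ⟨h N, hmem N, fun k hk => ?_⟩
  have hN : max (f k) (f kᶜ) ≤ N := Finset.le_sup (f := fun k => max (f k) (f kᶜ)) hk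
  have hk_not : ¬k ⊆ h N := fun hs =>
    hf k (h𝒟mem k hk) (hs.trans (hanti.antitone ((le_max_left _ _).trans hN)))
  have hkc_not : ¬kᶜ ⊆ h N := fun hs =>
    hf kᶜ (ℌ.compl_mem k (h𝒟mem k hk)) (hs.trans (hanti.antitone ((le_max_right _ _).trans hN)))
  obtain ⟨h1, h2⟩ := hcon k hk N
  obtain ⟨a, ha, ha'⟩ := Set.not_subset.1 h1
  obtain ⟨b, hb, hb'⟩ := Set.not_subset.1 h2
  obtain ⟨x, hx, hx'⟩ := Set.not_subset.1 hk_not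
  obtain ⟨y, hy, hy'⟩ := Set.not_subset.1 hkc_not
  exact ⟨⟨b, hb, not_not.1 hb'⟩, ⟨a, ha, ha'⟩, ⟨x, hx', hx⟩, ⟨y, hy', hy⟩⟩
end
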